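/- arXiv:2006.10581 — 4 statements merged into one kernel-verified Lean document; each statement's English description precedes it below -/
import Mathlib

section
/- Let d, k, ℓ ≥ 1 be integers and σ > 0. Let Σ_T ∈ ℝ^{d×d} be positive semidefinite and let A ∈ ℝ^{d×d} satisfy A Aᵀ = Σ_T. Let z be a standard Gaussian vector in ℝ^d, let x = A z, and let w be an independent random vector in ℝ^k with i.i.d. N(0, σ²) coordinates. Let V ∈ ℝ^{k×ℓ} and W_T, Ŵ_T ∈ ℝ^{ℓ×d}. Setting y = V φ(W_T x) + w and ŷ = V φ(Ŵ_T x), one has E[‖ŷ − y‖²] ≥ (1/4) σ_min(V)² · trace((Ŵ_T − W_T) Σ_T (Ŵ_T − W_T)ᵀ) + k σ², where σ_min(V) denotes the smallest singular value of V. -/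
/-!
Write `y = V φ(W_T x) + w` and `ŷ = V φ(Ŵ_T x)`. The noise `w` is centred and independent of `x`, so
by Pythagoras `E‖ŷ - y‖² = E‖V (φ(Ŵ_T x) - φ(W_T x))‖² + E‖w‖²`, and the first term is at least
`σ_min(V)² E‖φ(Ŵ_T x) - φ(W_T x)‖²`. Since `φ(t) - φ(-t) = t`, the parallelogram law gives
`(s - t)² ≤ 2 (φ(s) - φ(t))² + 2 (φ(-s) - φ(-t))²`. The two terms on the right have the same
expectation when `(s, t)` has a symmetric law, so the nonlinearity loses at most a factor `4`:
`E‖(Ŵ_T - W_T) x‖² ≤ 4 E‖φ(Ŵ_T x) - φ(W_T x)‖²`. Only the symmetry of the law of `x` and its second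
moments enter, and the only properties of the activation are `φ(t) - φ(-t) = t` and Lipschitz
continuity.
-/

open MeasureTheory ProbabilityTheory Matrix

/-- The ReLU function. -/
noncomputable def relu (t : ℝ) : ℝ := max t 0

/-- The smallest singular value of a matrix, i.e. the infimum of `‖V u‖` over
Euclidean-unit vectors `u`. -/
noncomputable def sigmaMin {k l : ℕ} (V : Matrix (Fin k) (Fin l) ℝ) : ℝ :=
  sInf {r : ℝ | ∃ u : Fin l → ℝ, ∑ i, u i ^ 2 = 1 ∧
    r = Real.sqrt (∑ i, (V.mulVec u) i ^ 2)}

section SmallestSingularValue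

variable {k l : ℕ} (V : Matrix (Fin k) (Fin l) ℝ)

lemma sigmaMin_nonneg : 0 ≤ sigmaMin V := by
  refine Real.sInf_nonneg ?_
  rintro _ ⟨u, -, rfl⟩
  exact Real.sqrt_nonneg _

lemma sq_sigmaMin_le_of_sum_sq_eq_one {u : Fin l → ℝ} (hu : ∑ j, u j ^ 2 = 1) :
    sigmaMin V ^ 2 ≤ ∑ i, (V *ᵥ u) i ^ 2 := by
  have hle : sigmaMin V ≤ √(∑ i, (V *ᵥ u) i ^ 2) := by
    refine csInf_le ⟨0, ?_⟩ ⟨u, hu, rfl⟩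
    rintro _ ⟨u, -, rfl⟩
    exact Real.sqrt_nonneg _
  exact (Real.le_sqrt (sigmaMin_nonneg V) (by positivity)).1 hle

lemma sq_sigmaMin_mul_sum_sq_le (u : Fin l → ℝ) :
    sigmaMin V ^ 2 * ∑ j, u j ^ 2 ≤ ∑ i, (V *ᵥ u) i ^ 2 := by
  obtain ⟨r, hr_nonneg, hr_sq⟩ : ∃ r : ℝ, 0 ≤ r ∧ r ^ 2 = ∑ j, u j ^ 2 :=
    ⟨√(∑ j, u j ^ 2), Real.sqrt_nonneg _, Real.sq_sqrt (by positivity)⟩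
  rcases hr_nonneg.eq_or_lt with hr_zero | hr_pos
  · rw [← hr_sq, ← hr_zero, zero_pow two_ne_zero, mul_zero]
    positivity
  have hunit : ∑ j, (r⁻¹ • u) j ^ 2 = 1 := by
    simp only [Pi.smul_apply, smul_eq_mul, mul_pow]
    rw [← Finset.mul_sum, ← hr_sq, inv_pow, inv_mul_cancel₀ (by positivity)]
  calc sigmaMin V ^ 2 * ∑ j, u j ^ 2
      ≤ (∑ i, (V *ᵥ (r⁻¹ • u)) i ^ 2) * r ^ 2 := by
        rw [hr_sq]; gcongr; exact sq_sigmaMin_le_of_sum_sq_eq_one V hunit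
    _ = ∑ i, (V *ᵥ u) i ^ 2 := by
        simp only [mulVec_smul, Pi.smul_apply, smul_eq_mul, mul_pow, Finset.sum_mul]
        exact Finset.sum_congr rfl fun i _ => by field_simp

end SmallestSingularValue

section SecondMoments

variable {Ω ι κ : Type*} [MeasurableSpace Ω] {P : Measure Ω}

/-- The matrix `E[x xᵀ]` of second moments of a random vector `x`, its covariance matrix when `x` is
centred. It is meant for square-integrable `x`: an entry with non-integrable integrand is `0`. -/
noncomputable def secondMomentMatrix (P : Measure Ω) (x : Ω → ι → ℝ) : Matrix ι ι ℝ :=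
  Matrix.of fun i j => ∫ ω, x ω i * x ω j ∂P

lemma memLp_mulVec [Fintype ι] {x : Ω → ι → ℝ} {p : ENNReal} (hx : ∀ i, MemLp (fun ω => x ω i) p P)
    (M : Matrix κ ι ℝ) (i : κ) : MemLp (fun ω => (M *ᵥ x ω) i) p P :=
  memLp_finsetSum _ fun j _ => (hx j).const_mul (M i j)

lemma trace_secondMomentMatrix [Fintype ι] {x : Ω → ι → ℝ} (hx : ∀ i, MemLp (fun ω => x ω i) 2 P) :
    (secondMomentMatrix P x).trace = ∫ ω, ∑ i, x ω i ^ 2 ∂P := by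
  rw [integral_finsetSum _ fun i _ => (hx i).integrable_sq]
  simp only [secondMomentMatrix, trace, diag_apply, of_apply, pow_two]

lemma secondMomentMatrix_mulVec [Fintype ι] {x : Ω → ι → ℝ} (hx : ∀ i, MemLp (fun ω => x ω i) 2 P)
    (M : Matrix κ ι ℝ) :
    secondMomentMatrix P (fun ω => M *ᵥ x ω) = M * secondMomentMatrix P x * Mᵀ := by
  ext a b
  have hint (i j : ι) : Integrable (fun ω => M a i * (x ω i * x ω j) * M b j) P :=
    (((hx i).integrable_mul (hx j)).const_mul _).mul_const _
  calc ∫ ω, (M *ᵥ x ω) a * (M *ᵥ x ω) b ∂P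
      = ∫ ω, ∑ j, ∑ i, M a i * (x ω i * x ω j) * M b j ∂P := by
        congr! 2 with ω
        simp only [mulVec, dotProduct, Finset.sum_mul_sum]
        rw [Finset.sum_comm]
        exact Finset.sum_congr rfl fun j _ => Finset.sum_congr rfl fun i _ => by ring
    _ = ∑ j, ∑ i, M a i * (∫ ω, x ω i * x ω j ∂P) * M b j := by
        rw [integral_finsetSum _ fun j _ => integrable_finsetSum _ fun i _ => hint i j]
        simp only [integral_finsetSum _ fun i _ => hint i _, integral_mul_const, integral_const_mul]
    _ = (M * secondMomentMatrix P x * Mᵀ) a b := by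
        simp only [mul_apply, transpose_apply, secondMomentMatrix, of_apply, Finset.sum_mul]

lemma integral_sum_sq_sub_of_integral_mul_eq_zero [Fintype ι] {u w : Ω → ι → ℝ}
    (hu : ∀ i, MemLp (fun ω => u ω i) 2 P) (hw : ∀ i, MemLp (fun ω => w ω i) 2 P)
    (horth : ∀ i, ∫ ω, u ω i * w ω i ∂P = 0) :
    ∫ ω, ∑ i, (u ω i - w ω i) ^ 2 ∂P = ∫ ω, ∑ i, u ω i ^ 2 ∂P + ∫ ω, ∑ i, w ω i ^ 2 ∂P := by
  have hint (i : ι) : Integrable (fun ω => (u ω i - w ω i) ^ 2) P :=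
    ((hu i).sub (hw i)).integrable_sq
  have hcoord (i : ι) :
      ∫ ω, (u ω i - w ω i) ^ 2 ∂P = ∫ ω, u ω i ^ 2 ∂P + ∫ ω, w ω i ^ 2 ∂P := by
    have huw : Integrable (fun ω => 2 * (u ω i * w ω i)) P :=
      ((hu i).integrable_mul (hw i)).const_mul 2
    have hu_sub : Integrable (fun ω => u ω i ^ 2 - 2 * (u ω i * w ω i)) P :=
      (hu i).integrable_sq.sub huw
    simp only [sub_sq, mul_assoc]
    rw [integral_add hu_sub (hw i).integrable_sq,
      integral_sub (hu i).integrable_sq huw, integral_const_mul, horth, mul_zero, sub_zero]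
  rw [integral_finsetSum _ fun i _ => hint i,
    integral_finsetSum _ fun i _ => (hu i).integrable_sq,
    integral_finsetSum _ fun i _ => (hw i).integrable_sq, ← Finset.sum_add_distrib]
  exact Finset.sum_congr rfl fun i _ => hcoord i

end SecondMoments

section ProductLaws

variable {Ω ι : Type*} [MeasurableSpace Ω] {P : Measure Ω} [Fintype ι] {μ : ι → Measure ℝ}
  [∀ i, IsProbabilityMeasure (μ i)] {z : Ω → ι → ℝ}

lemma hasLaw_apply_of_hasLaw_pi (hz : HasLaw z (Measure.pi μ) P) (i : ι) :
    HasLaw (fun ω => z ω i) (μ i) P :=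
  (measurePreserving_eval μ i).fun_comp_hasLaw hz

lemma memLp_apply_of_hasLaw_pi (hz : HasLaw z (Measure.pi μ) P) {p : ENNReal}
    (hμ : ∀ i, MemLp id p (μ i)) (i : ι) : MemLp (fun ω => z ω i) p P :=
  ((hasLaw_apply_of_hasLaw_pi hz i).identDistrib .id).memLp_iff.2 (hμ i)

lemma secondMomentMatrix_of_hasLaw_pi [DecidableEq ι] (hz : HasLaw z (Measure.pi μ) P)
    (hmean : ∀ i, ∫ t, t ∂μ i = 0) :
    secondMomentMatrix P z = diagonal fun i => Var[id; μ i] := by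
  have : IsProbabilityMeasure P := hz.isProbabilityMeasure
  have hcoord := hasLaw_apply_of_hasLaw_pi hz
  have hmean_coord (i : ι) : ∫ ω, z ω i ∂P = 0 := (hcoord i).integral_eq.trans (hmean i)
  have hindep : iIndepFun (fun i ω => z ω i) P := (iIndepFun_iff_hasLaw_pi_pi hcoord).2 hz
  ext i j
  rcases eq_or_ne i j with rfl | hij
  · rw [diagonal_apply_eq, ← (hcoord i).variance_eq,
      variance_of_integral_eq_zero (hcoord i).aemeasurable (hmean_coord i)]
    simp only [secondMomentMatrix, of_apply, pow_two]
  · rw [diagonal_apply_ne _ hij, secondMomentMatrix, of_apply,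
      (hindep.indepFun hij).integral_fun_mul_eq_mul_integral
        (hcoord i).aemeasurable.aestronglyMeasurable (hcoord j).aemeasurable.aestronglyMeasurable,
      hmean_coord i, zero_mul]

lemma secondMomentMatrix_of_hasLaw_pi_gaussianReal [DecidableEq ι] {v : NNReal}
    (hz : HasLaw z (Measure.pi fun _ => gaussianReal 0 v) P) :
    secondMomentMatrix P z = (v : ℝ) • 1 := by
  rw [secondMomentMatrix_of_hasLaw_pi hz fun _ => integral_id_gaussianReal]
  simp only [variance_id_gaussianReal, smul_one_eq_diagonal]

lemma memLp_apply_of_hasLaw_pi_gaussianReal {v : NNReal}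
    (hz : HasLaw z (Measure.pi fun _ => gaussianReal 0 v) P) (i : ι) :
    MemLp (fun ω => z ω i) 2 P :=
  memLp_apply_of_hasLaw_pi hz (fun _ => memLp_id_gaussianReal 2) i

lemma identDistrib_neg_of_hasLaw_pi (hz : HasLaw z (Measure.pi μ) P)
    (hμ : ∀ i, MeasurePreserving Neg.neg (μ i) (μ i)) : IdentDistrib (fun ω => -z ω) z P P :=
  ((measurePreserving_pi μ μ hμ).fun_comp_hasLaw hz).identDistrib hz

lemma identDistrib_neg_of_hasLaw_pi_gaussianReal {v : NNReal}
    (hz : HasLaw z (Measure.pi fun _ => gaussianReal 0 v) P) :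
    IdentDistrib (fun ω => -z ω) z P P :=
  identDistrib_neg_of_hasLaw_pi hz fun _ =>
    ⟨measurable_neg, gaussianReal_map_neg.trans (by rw [neg_zero])⟩

end ProductLaws

section Activations

lemma relu_sub_relu_neg (t : ℝ) : relu t - relu (-t) = t := by
  rcases le_total t 0 with ht | ht <;> simp [relu, ht]

lemma lipschitzWith_relu : LipschitzWith 1 relu :=
  LipschitzWith.id.max_const 0

lemma sq_sub_le_of_sub_neg_eq {φ : ℝ → ℝ} (hφ : ∀ t, φ t - φ (-t) = t) (s t : ℝ) :
    (s - t) ^ 2 ≤ 2 * ((φ s - φ t) ^ 2 + (φ (-s) - φ (-t)) ^ 2) := by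
  have hst : s - t = (φ s - φ t) - (φ (-s) - φ (-t)) := by linarith [hφ s, hφ t]
  rw [hst, sub_eq_add_neg _ (φ (-s) - φ (-t)), ← neg_sq (φ (-s) - φ (-t))]
  exact add_sq_le

variable {Ω : Type*} [MeasurableSpace Ω] {P : Measure Ω} {φ : ℝ → ℝ} {K : NNReal}
  {s t : Ω → ℝ}

lemma memLp_comp_sub_comp (hLip : LipschitzWith K φ) {p : ENNReal}
    (hs : AEMeasurable s P) (ht : AEMeasurable t P)
    (hst : MemLp (fun ω => s ω - t ω) p P) : MemLp (fun ω => φ (s ω) - φ (t ω)) p P :=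
  have hmeas := hLip.continuous.measurable
  hst.of_le_mul ((hmeas.comp_aemeasurable hs).sub (hmeas.comp_aemeasurable ht)).aestronglyMeasurable
    (ae_of_all _ fun ω => hLip.norm_sub_le (s ω) (t ω))

lemma integral_sq_sub_le_four_mul (hφ : ∀ t, φ t - φ (-t) = t) (hLip : LipschitzWith K φ)
    (hsymm : IdentDistrib (fun ω => (-s ω, -t ω)) (fun ω => (s ω, t ω)) P P)
    (hst : MemLp (fun ω => s ω - t ω) 2 P) :
    ∫ ω, (s ω - t ω) ^ 2 ∂P ≤ 4 * ∫ ω, (φ (s ω) - φ (t ω)) ^ 2 ∂P := by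
  have hmeas := hLip.continuous.measurable
  have hdist : IdentDistrib (fun ω => (φ (-s ω) - φ (-t ω)) ^ 2)
      (fun ω => (φ (s ω) - φ (t ω)) ^ 2) P P :=
    hsymm.comp (u := fun q : ℝ × ℝ => (φ q.1 - φ q.2) ^ 2) (by fun_prop)
  have hint : Integrable (fun ω => (φ (s ω) - φ (t ω)) ^ 2) P :=
    (memLp_comp_sub_comp hLip hsymm.aemeasurable_snd.fst hsymm.aemeasurable_snd.snd
      hst).integrable_sq
  have hint_neg := hdist.integrable_iff.2 hint
  calc ∫ ω, (s ω - t ω) ^ 2 ∂P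
      ≤ ∫ ω, 2 * ((φ (s ω) - φ (t ω)) ^ 2 + (φ (-s ω) - φ (-t ω)) ^ 2) ∂P :=
        integral_mono hst.integrable_sq ((hint.add hint_neg).const_mul 2) fun ω =>
          sq_sub_le_of_sub_neg_eq hφ (s ω) (t ω)
    _ = 4 * ∫ ω, (φ (s ω) - φ (t ω)) ^ 2 ∂P := by
        rw [integral_const_mul, integral_add hint hint_neg, hdist.integral_eq]
        ring

end Activations

section NeuralNetwork

variable {Ω ι κ : Type*} [MeasurableSpace Ω] {P : Measure Ω} [Fintype ι]
  {φ : ℝ → ℝ} {K : NNReal} {x : Ω → ι → ℝ}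

lemma memLp_hiddenLayer_sub (hLip : LipschitzWith K φ) (hx : ∀ i, MemLp (fun ω => x ω i) 2 P)
    (W W' : Matrix κ ι ℝ) (j : κ) :
    MemLp (fun ω => φ ((W' *ᵥ x ω) j) - φ ((W *ᵥ x ω) j)) 2 P :=
  memLp_comp_sub_comp hLip (memLp_mulVec hx W' j).aestronglyMeasurable.aemeasurable
    (memLp_mulVec hx W j).aestronglyMeasurable.aemeasurable
    ((memLp_mulVec hx W' j).sub (memLp_mulVec hx W j))

lemma trace_le_four_mul_integral_hiddenLayer_sub [Fintype κ] (hφ : ∀ t, φ t - φ (-t) = t)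
    (hLip : LipschitzWith K φ) (hx : ∀ i, MemLp (fun ω => x ω i) 2 P)
    (hsymm : IdentDistrib (fun ω => -x ω) x P P) (W W' : Matrix κ ι ℝ) :
    ((W' - W) * secondMomentMatrix P x * (W' - W)ᵀ).trace ≤
      4 * ∫ ω, ∑ j, (φ ((W' *ᵥ x ω) j) - φ ((W *ᵥ x ω) j)) ^ 2 ∂P := by
  have hdiff (j : κ) : MemLp (fun ω => (W' *ᵥ x ω) j - (W *ᵥ x ω) j) 2 P :=
    (memLp_mulVec hx W' j).sub (memLp_mulVec hx W j)
  have hsymm_pair (j : κ) :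
      IdentDistrib (fun ω => (-(W' *ᵥ x ω) j, -(W *ᵥ x ω) j))
        (fun ω => ((W' *ᵥ x ω) j, (W *ᵥ x ω) j)) P P := by
    have h := hsymm.comp (u := fun v => ((W' *ᵥ v) j, (W *ᵥ v) j)) (by fun_prop)
    simpa only [Function.comp_def, mulVec_neg, Pi.neg_apply] using h
  rw [← secondMomentMatrix_mulVec hx, trace_secondMomentMatrix (memLp_mulVec hx _)]
  simp only [sub_mulVec, Pi.sub_apply]
  rw [integral_finsetSum _ fun j _ => (hdiff j).integrable_sq,
    integral_finsetSum _ fun j _ => (memLp_hiddenLayer_sub hLip hx W W' j).integrable_sq,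
    Finset.mul_sum]
  exact Finset.sum_le_sum fun j _ => integral_sq_sub_le_four_mul hφ hLip (hsymm_pair j) (hdiff j)

lemma sq_sigmaMin_mul_integral_sum_sq_le {k l : ℕ} (V : Matrix (Fin k) (Fin l) ℝ)
    {u : Ω → Fin l → ℝ} (hu : ∀ j, MemLp (fun ω => u ω j) 2 P) :
    sigmaMin V ^ 2 * ∫ ω, ∑ j, u ω j ^ 2 ∂P ≤ ∫ ω, ∑ i, (V *ᵥ u ω) i ^ 2 ∂P := by
  rw [← integral_const_mul]
  exact integral_mono ((integrable_finsetSum _ fun j _ => (hu j).integrable_sq).const_mul _)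
    (integrable_finsetSum _ fun i _ => (memLp_mulVec hu V i).integrable_sq)
    fun ω => sq_sigmaMin_mul_sum_sq_le V (u ω)

theorem nn_generalization_error_fixed_output_general {k l : ℕ} (hφ : ∀ t, φ t - φ (-t) = t)
    (hLip : LipschitzWith K φ) (hx : ∀ i, MemLp (fun ω => x ω i) 2 P)
    (hsymm : IdentDistrib (fun ω => -x ω) x P P) {w : Ω → Fin k → ℝ}
    (hw : ∀ i, MemLp (fun ω => w ω i) 2 P) (hmean : ∀ i, ∫ ω, w ω i ∂P = 0) (hindep : x ⟂ᵢ[P] w)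
    (V : Matrix (Fin k) (Fin l) ℝ) (W W' : Matrix (Fin l) ι ℝ) :
    (1 / 4) * sigmaMin V ^ 2 * ((W' - W) * secondMomentMatrix P x * (W' - W)ᵀ).trace +
        (secondMomentMatrix P w).trace ≤
      ∫ ω, ∑ i, ((V *ᵥ fun j => φ ((W' *ᵥ x ω) j)) i -
        ((V *ᵥ fun j => φ ((W *ᵥ x ω) j)) i + w ω i)) ^ 2 ∂P := by
  set u : Ω → Fin l → ℝ := fun ω j => φ ((W' *ᵥ x ω) j) - φ ((W *ᵥ x ω) j)
  have hu : ∀ j, MemLp (fun ω => u ω j) 2 P := memLp_hiddenLayer_sub hLip hx W W'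
  have horth (i : Fin k) : ∫ ω, (V *ᵥ u ω) i * w ω i ∂P = 0 := by
    have hmeas := hLip.continuous.measurable
    have hindep_coord : (fun ω => (V *ᵥ u ω) i) ⟂ᵢ[P] fun ω => w ω i :=
      hindep.comp (φ := fun v => (V *ᵥ fun j => φ ((W' *ᵥ v) j) - φ ((W *ᵥ v) j)) i)
        (by fun_prop) (measurable_pi_apply i)
    rw [hindep_coord.integral_fun_mul_eq_mul_integral (memLp_mulVec hu V i).aestronglyMeasurable
      (hw i).aestronglyMeasurable, hmean, mul_zero]
  calc _ ≤ sigmaMin V ^ 2 * ∫ ω, ∑ j, u ω j ^ 2 ∂P + ∫ ω, ∑ i, w ω i ^ 2 ∂P := by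
        rw [trace_secondMomentMatrix hw, mul_assoc, mul_left_comm]
        gcongr
        linarith [trace_le_four_mul_integral_hiddenLayer_sub hφ hLip hx hsymm W W']
    _ ≤ ∫ ω, ∑ i, (V *ᵥ u ω) i ^ 2 ∂P + ∫ ω, ∑ i, w ω i ^ 2 ∂P := by
        gcongr
        exact sq_sigmaMin_mul_integral_sum_sq_le V hu
    _ = ∫ ω, ∑ i, ((V *ᵥ u ω) i - w ω i) ^ 2 ∂P :=
        (integral_sum_sq_sub_of_integral_mul_eq_zero (memLp_mulVec hu V) hw horth).symm
    _ = _ := by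
        have hu_sub (ω : Ω) :
            u ω = (fun j => φ ((W' *ᵥ x ω) j)) - fun j => φ ((W *ᵥ x ω) j) := rfl
        simp only [hu_sub, mulVec_sub, Pi.sub_apply, sub_sub]

theorem nn_generalization_error_fixed_output_of_gaussian {k l : ℕ} {η : Type*} [Fintype η]
    (hφ : ∀ t, φ t - φ (-t) = t) (hLip : LipschitzWith K φ) {z : Ω → η → ℝ}
    (hz : HasLaw z (Measure.pi fun _ => gaussianReal 0 1) P) {w : Ω → Fin k → ℝ} {v : NNReal}
    (hw : HasLaw w (Measure.pi fun _ => gaussianReal 0 v) P) (hindep : z ⟂ᵢ[P] w)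
    (A : Matrix ι η ℝ) (V : Matrix (Fin k) (Fin l) ℝ) (W W' : Matrix (Fin l) ι ℝ) :
    (1 / 4) * sigmaMin V ^ 2 * ((W' - W) * (A * Aᵀ) * (W' - W)ᵀ).trace + k * v ≤
      ∫ ω, ∑ i, ((V *ᵥ fun j => φ ((W' *ᵥ (A *ᵥ z ω)) j)) i -
        ((V *ᵥ fun j => φ ((W *ᵥ (A *ᵥ z ω)) j)) i + w ω i)) ^ 2 ∂P := by
  classical
  have hz_memLp := memLp_apply_of_hasLaw_pi_gaussianReal hz
  have hcov_x : secondMomentMatrix P (fun ω => A *ᵥ z ω) = A * Aᵀ := by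
    rw [secondMomentMatrix_mulVec hz_memLp, secondMomentMatrix_of_hasLaw_pi_gaussianReal hz,
      NNReal.coe_one, one_smul, Matrix.mul_one]
  have htrace_w : (secondMomentMatrix P w).trace = k * v := by
    rw [secondMomentMatrix_of_hasLaw_pi_gaussianReal hw, trace_smul, trace_one, Fintype.card_fin,
      smul_eq_mul, mul_comm]
  have hx_symm : IdentDistrib (fun ω => -(A *ᵥ z ω)) (fun ω => A *ᵥ z ω) P P := by
    simpa only [Function.comp_def, mulVec_neg] using
      (identDistrib_neg_of_hasLaw_pi_gaussianReal hz).comp (u := fun u => A *ᵥ u) (by fun_prop)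
  rw [← hcov_x, ← htrace_w]
  exact nn_generalization_error_fixed_output_general hφ hLip (memLp_mulVec hz_memLp A) hx_symm
    (memLp_apply_of_hasLaw_pi_gaussianReal hw)
    (fun i => (hasLaw_apply_of_hasLaw_pi hw i).integral_eq.trans integral_id_gaussianReal)
    (hindep.comp (φ := fun u => A *ᵥ u) (by fun_prop) measurable_id) V W W'

end NeuralNetwork

/-- lower bound on the target generalization error of a one-hidden layer
neural network with fixed hidden-to-output layer `V`. -/
theorem nn_generalization_error_fixed_output
    (d k l : ℕ) (hd : 1 ≤ d) (hk : 1 ≤ k) (hl : 1 ≤ l) (σ : ℝ) (hσ : 0 < σ)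
    (SigT A : Matrix (Fin d) (Fin d) ℝ)
    (hSigT : SigT.PosSemidef) (hA : A * Aᵀ = SigT)
    (V : Matrix (Fin k) (Fin l) ℝ)
    (WT Wh : Matrix (Fin l) (Fin d) ℝ) :
    (∫ p : (Fin d → ℝ) × (Fin k → ℝ),
        (∑ i, (V.mulVec (fun j => relu (Wh.mulVec (A.mulVec p.1) j)) i -
               (V.mulVec (fun j => relu (WT.mulVec (A.mulVec p.1) j)) i + p.2 i)) ^ 2)
      ∂((Measure.pi fun _ : Fin d => gaussianReal 0 1).prod
          (Measure.pi fun _ : Fin k => gaussianReal 0 ⟨σ ^ 2, sq_nonneg σ⟩))) ≥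
      (1 / 4) * sigmaMin V ^ 2 * ((Wh - WT) * SigT * (Wh - WT)ᵀ).trace + k * σ ^ 2 := by
  set v : NNReal := ⟨σ ^ 2, sq_nonneg σ⟩
  subst hA
  exact nn_generalization_error_fixed_output_of_gaussian (v := v) relu_sub_relu_neg
    lipschitzWith_relu measurePreserving_fst.hasLaw measurePreserving_snd.hasLaw
    (indepFun_prod measurable_id measurable_id) A V WT Wh
end

section
/- Let d ≥ 1, let z be a standard Gaussian vector in ℝ^d, and let a, b ∈ ℝ^d be nonzero vectors with γ := ⟨a, b⟩ / (‖a‖ ‖b‖). Then 2 E[φ(⟨a, z⟩) φ(⟨b, z⟩)] = ‖a‖ ‖b‖ · (√(1 − γ²) + (π − arccos(γ)) γ) / π. -/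
open MeasureTheory ProbabilityTheory

/-! A centered Gaussian pair is determined in law by its covariance matrix, so a pair with standard
deviations `σ`, `τ` and correlation `cos θ` is distributed as
`(σ Z₁, τ (cos θ Z₁ + sin θ Z₂))` with `Z₁`, `Z₂` independent standard normal variables. The product
of the two ReLUs is positively homogeneous of degree two, so in polar coordinates its Gaussian
integral splits into a radial factor and the integral of `cos x * cos (x - θ)` over the arc on
which both cosines are positive. -/

open Real (pi_pos)
open scoped Real

lemma relu_of_nonneg {t : ℝ} (ht : 0 ≤ t) : relu t = t := max_eq_left ht

lemma relu_of_nonpos {t : ℝ} (ht : t ≤ 0) : relu t = 0 := max_eq_right ht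

lemma relu_mul_of_nonneg {r : ℝ} (hr : 0 ≤ r) (t : ℝ) : relu (r * t) = r * relu t := by
  simp only [relu, mul_max_of_nonneg _ _ hr, mul_zero]

@[fun_prop]
lemma continuous_relu : Continuous relu := continuous_id.max continuous_const

lemma integral_cos_mul_cos_sub (θ : ℝ) :
    ∫ x in (θ - π / 2)..(π / 2), Real.cos x * Real.cos (x - θ) =
      ((π - θ) * Real.cos θ + Real.sin θ) / 2 := by
  have product_to_sum (x : ℝ) :
      Real.cos x * Real.cos (x - θ) = (Real.cos θ + Real.cos (2 * x - θ)) / 2 := by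
    have h₁ := Real.cos_sub x (x - θ)
    have h₂ := Real.cos_add x (x - θ)
    rw [sub_sub_cancel] at h₁
    rw [← add_sub_assoc, ← two_mul] at h₂
    linarith
  have upper : 2 * (π / 2) - θ = π - θ := by ring
  have lower : 2 * (θ - π / 2) - θ = -(π - θ) := by ring
  simp_rw [product_to_sum]
  rw [intervalIntegral.integral_div, intervalIntegral.integral_add
      (Continuous.intervalIntegrable (by fun_prop) _ _)
      (Continuous.intervalIntegrable (by fun_prop) _ _), intervalIntegral.integral_const,
    intervalIntegral.integral_comp_mul_sub _ two_ne_zero, integral_cos, upper, lower, Real.sin_neg,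
    Real.sin_pi_sub, smul_eq_mul, smul_eq_mul]
  ring

lemma relu_cos_mul_relu_cos_sub_eq_zero {θ x : ℝ} (hθπ : θ ≤ π)
    (hx : x ∈ Set.Ioo (-π) π) (hx' : x ∉ Set.Ioc (θ - π / 2) (π / 2)) :
    relu (Real.cos x) * relu (Real.cos (x - θ)) = 0 := by
  have hx_sides : x ≤ θ - π / 2 ∨ π / 2 < x := by
    rwa [Set.mem_Ioc, not_and_or, not_lt, not_le] at hx'
  rcases hx_sides with hle | hgt
  · rcases le_total (-(π / 2)) x with hge | hle'
    · have : Real.cos (x - θ) ≤ 0 := by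
        rw [← Real.cos_neg]
        exact Real.cos_nonpos_of_pi_div_two_le_of_le (by linarith) (by linarith)
      rw [relu_of_nonpos this, mul_zero]
    · have : Real.cos x ≤ 0 := by
        rw [← Real.cos_neg]
        exact Real.cos_nonpos_of_pi_div_two_le_of_le (by linarith) (by linarith [hx.1, pi_pos])
      rw [relu_of_nonpos this, zero_mul]
  · have : Real.cos x ≤ 0 :=
      Real.cos_nonpos_of_pi_div_two_le_of_le hgt.le (by linarith [hx.2, pi_pos])
    rw [relu_of_nonpos this, zero_mul]

lemma integral_relu_cos_mul_relu_cos_sub {θ : ℝ} (hθ₀ : 0 ≤ θ) (hθπ : θ ≤ π) :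
    ∫ x in Set.Ioo (-π) π, relu (Real.cos x) * relu (Real.cos (x - θ)) =
      ((π - θ) * Real.cos θ + Real.sin θ) / 2 := by
  have arc_subset : Set.Ioc (θ - π / 2) (π / 2) ⊆ Set.Ioo (-π) π := fun x hx ↦
    ⟨by linarith [hx.1, pi_pos], by linarith [hx.2, pi_pos]⟩
  have relu_eq_on_arc : Set.EqOn (fun x ↦ relu (Real.cos x) * relu (Real.cos (x - θ)))
      (fun x ↦ Real.cos x * Real.cos (x - θ)) (Set.Ioc (θ - π / 2) (π / 2)) := by
    intro x hx
    have hcos : 0 ≤ Real.cos x :=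
      Real.cos_nonneg_of_neg_pi_div_two_le_of_le (by linarith [hx.1]) hx.2
    have hcos_sub : 0 ≤ Real.cos (x - θ) :=
      Real.cos_nonneg_of_neg_pi_div_two_le_of_le (by linarith [hx.1]) (by linarith [hx.2])
    simp only [relu_of_nonneg hcos, relu_of_nonneg hcos_sub]
  rw [setIntegral_eq_of_subset_of_forall_sdiff_eq_zero measurableSet_Ioo arc_subset
      fun x hx ↦ relu_cos_mul_relu_cos_sub_eq_zero hθπ hx.1 hx.2,
    setIntegral_congr_fun measurableSet_Ioc relu_eq_on_arc,
    ← intervalIntegral.integral_of_le (by linarith), integral_cos_mul_cos_sub]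

lemma integral_rpow_mul_exp_neg_sq_div_two {q : ℝ} (hq : -2 < q) :
    ∫ r in Set.Ioi (0 : ℝ), r ^ (q + 1) * Real.exp (-r ^ 2 / 2) =
      2 ^ (q / 2) * Real.Gamma (q / 2 + 1) := by
  have exponent : (q + 1 + 1) / 2 = q / 2 + 1 := by ring
  have h := integral_rpow_mul_exp_neg_mul_rpow (p := 2) (q := q + 1) (b := 2⁻¹)
    two_pos (by linarith) (by positivity)
  simp_rw [Real.rpow_two, neg_div, exponent, Real.inv_rpow zero_le_two, Real.rpow_neg zero_le_two,
    inv_inv, Real.rpow_add_one two_ne_zero, one_div] at h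
  convert! h using 1
  · congr! 4; ring
  · ring

lemma gaussianPDFReal_cos_mul_gaussianPDFReal_sin (r x : ℝ) :
    gaussianPDFReal 0 1 (r * Real.cos x) * gaussianPDFReal 0 1 (r * Real.sin x) =
      (2 * π)⁻¹ * Real.exp (-r ^ 2 / 2) := by
  simp only [gaussianPDFReal_def, NNReal.coe_one, mul_one, sub_zero]
  rw [mul_mul_mul_comm, ← Real.exp_add, ← mul_inv, Real.mul_self_sqrt (by positivity)]
  congr 2
  linear_combination (-r ^ 2 / 2) * Real.sin_sq_add_cos_sq x

section Planar

variable {E : Type*} [NormedAddCommGroup E] [NormedSpace ℝ E]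

lemma integral_gaussianReal_prod_eq_polar (f : ℝ × ℝ → E) :
    ∫ p, f p ∂(gaussianReal 0 1).prod (gaussianReal 0 1) =
      ∫ p in Set.Ioi (0 : ℝ) ×ˢ Set.Ioo (-π) π,
        ((2 * π)⁻¹ * (p.1 * Real.exp (-p.1 ^ 2 / 2))) •
          f (p.1 * Real.cos p.2, p.1 * Real.sin p.2) := by
  rw [gaussianReal_of_var_ne_zero 0 one_ne_zero,
    prod_withDensity (measurable_gaussianPDF _ _) (measurable_gaussianPDF _ _),
    integral_withDensity_eq_integral_toReal_smul (by fun_prop)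
      (ae_of_all _ fun p ↦ ENNReal.mul_lt_top gaussianPDF_lt_top gaussianPDF_lt_top),
    ← Measure.volume_eq_prod, ← integral_comp_polarCoord_symm, polarCoord_target]
  congr! 2 with p
  rw [polarCoord_symm_apply, smul_smul, ENNReal.toReal_mul, toReal_gaussianPDF, toReal_gaussianPDF,
    gaussianPDFReal_cos_mul_gaussianPDFReal_sin, mul_left_comm]

lemma integral_gaussianReal_prod_of_homogeneous {q : ℝ} (hq : -2 < q) {f : ℝ × ℝ → E}
    (hf : ∀ r : ℝ, 0 < r → ∀ p, f (r • p) = r ^ q • f p) :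
    ∫ p, f p ∂(gaussianReal 0 1).prod (gaussianReal 0 1) =
      (2 ^ (q / 2) * Real.Gamma (q / 2 + 1) / (2 * π)) •
        ∫ x in Set.Ioo (-π) π, f (Real.cos x, Real.sin x) := by
  have separated : Set.EqOn
      (fun p : ℝ × ℝ ↦ ((2 * π)⁻¹ * (p.1 * Real.exp (-p.1 ^ 2 / 2))) •
        f (p.1 * Real.cos p.2, p.1 * Real.sin p.2))
      (fun p ↦ ((2 * π)⁻¹ * (p.1 ^ (q + 1) * Real.exp (-p.1 ^ 2 / 2))) •
        f (Real.cos p.2, Real.sin p.2))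
      (Set.Ioi 0 ×ˢ Set.Ioo (-π) π) := by
    rintro ⟨r, x⟩ ⟨hr, -⟩
    have hf' := hf r hr (Real.cos x, Real.sin x)
    simp only [Prod.smul_mk, smul_eq_mul] at hf'
    simp only [hf', smul_smul, Real.rpow_add_one (ne_of_gt hr)]
    congr 1
    ring
  rw [integral_gaussianReal_prod_eq_polar,
    setIntegral_congr_fun (measurableSet_Ioi.prod measurableSet_Ioo) separated,
    Measure.volume_eq_prod, ← Measure.prod_restrict,
    integral_prod_smul (fun r : ℝ ↦ (2 * π)⁻¹ * (r ^ (q + 1) * Real.exp (-r ^ 2 / 2)))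
      (fun x : ℝ ↦ f (Real.cos x, Real.sin x)),
    integral_const_mul, integral_rpow_mul_exp_neg_sq_div_two hq, inv_mul_eq_div]

end Planar

lemma integral_relu_mul_relu_gaussianReal_prod {θ : ℝ} (hθ₀ : 0 ≤ θ) (hθπ : θ ≤ π) :
    ∫ p : ℝ × ℝ, relu p.1 * relu (Real.cos θ * p.1 + Real.sin θ * p.2)
      ∂(gaussianReal 0 1).prod (gaussianReal 0 1) =
      ((π - θ) * Real.cos θ + Real.sin θ) / (2 * π) := by
  have homogeneous (r : ℝ) (hr : 0 < r) (p : ℝ × ℝ) :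
      relu (r • p).1 * relu (Real.cos θ * (r • p).1 + Real.sin θ * (r • p).2) =
        r ^ (2 : ℝ) • (relu p.1 * relu (Real.cos θ * p.1 + Real.sin θ * p.2)) := by
    have factor : Real.cos θ * (r * p.1) + Real.sin θ * (r * p.2) =
        r * (Real.cos θ * p.1 + Real.sin θ * p.2) := by ring
    simp only [Prod.smul_fst, Prod.smul_snd, smul_eq_mul, factor, relu_mul_of_nonneg hr.le,
      Real.rpow_two]
    ring
  have angle_sub (x : ℝ) :
      Real.cos θ * Real.cos x + Real.sin θ * Real.sin x = Real.cos (x - θ) := by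
    rw [Real.cos_sub]; ring
  rw [integral_gaussianReal_prod_of_homogeneous (q := 2) (by norm_num) homogeneous]
  simp only [angle_sub]
  rw [integral_relu_cos_mul_relu_cos_sub hθ₀ hθπ, div_self two_ne_zero, one_add_one_eq_two,
    Real.Gamma_two, Real.rpow_one, smul_eq_mul]
  field_simp

section Pairs

variable {Ω : Type*} {mΩ : MeasurableSpace Ω} {P : Measure Ω} {X Y : Ω → ℝ}

lemma variance_mul_add_mul [IsFiniteMeasure P] (hX : MemLp X 2 P) (hY : MemLp Y 2 P) (s t : ℝ) :
    Var[fun ω ↦ s * X ω + t * Y ω; P] =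
      s ^ 2 * Var[X; P] + 2 * (s * t) * cov[X, Y; P] + t ^ 2 * Var[Y; P] := by
  rw [variance_fun_add (hX.const_mul s) (hY.const_mul t), variance_const_mul, variance_const_mul,
    covariance_const_mul_left, covariance_const_mul_right]
  ring

lemma sq_covariance_le_variance_mul_variance [IsFiniteMeasure P] (hX : MemLp X 2 P)
    (hY : MemLp Y 2 P) : cov[X, Y; P] ^ 2 ≤ Var[X; P] * Var[Y; P] := by
  have nonneg (t : ℝ) : 0 ≤ Var[X; P] * (t * t) + 2 * cov[X, Y; P] * t + Var[Y; P] :=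
    calc
      0 ≤ Var[fun ω ↦ t * X ω + 1 * Y ω; P] := variance_nonneg _ _
      _ = Var[X; P] * (t * t) + 2 * cov[X, Y; P] * t + Var[Y; P] := by
        rw [variance_mul_add_mul hX hY]; ring
  have := discrim_le_zero nonneg
  rw [discrim] at this
  linarith

lemma map_prodMk_eq_of_hasGaussianLaw {Ω' : Type*} {mΩ' : MeasurableSpace Ω'} {P' : Measure Ω'}
    {X' Y' : Ω' → ℝ} (h : HasGaussianLaw (fun ω ↦ (X ω, Y ω)) P)
    (h' : HasGaussianLaw (fun ω ↦ (X' ω, Y' ω)) P') (hX : P[X] = P'[X']) (hY : P[Y] = P'[Y'])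
    (hVarX : Var[X; P] = Var[X'; P']) (hVarY : Var[Y; P] = Var[Y'; P'])
    (hcov : cov[X, Y; P] = cov[X', Y'; P']) :
    P.map (fun ω ↦ (X ω, Y ω)) = P'.map (fun ω ↦ (X' ω, Y' ω)) := by
  have := h.isProbabilityMeasure
  have := h'.isProbabilityMeasure
  refine Measure.ext_of_charFunDual ?_
  ext L
  have L_apply (x y : ℝ) : L (x, y) = L (1, 0) * x + L (0, 1) * y := by
    have : ((x, y) : ℝ × ℝ) = x • (1, 0) + y • (0, 1) := by simp
    rw [this, map_add, map_smul, map_smul, smul_eq_mul, smul_eq_mul, mul_comm x, mul_comm y]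
  rw [h.charFunDual_map_eq_fun, h'.charFunDual_map_eq_fun]
  simp_rw [fun ω ↦ L_apply (X ω) (Y ω), fun ω ↦ L_apply (X' ω) (Y' ω)]
  rw [variance_mul_add_mul h.fst.memLp_two h.snd.memLp_two,
    variance_mul_add_mul h'.fst.memLp_two h'.snd.memLp_two,
    integral_add (h.fst.integrable.const_mul _) (h.snd.integrable.const_mul _),
    integral_add (h'.fst.integrable.const_mul _) (h'.snd.integrable.const_mul _)]
  simp only [integral_const_mul, hX, hY, hVarX, hVarY, hcov]

end Pairs

section LinearForms

variable {ι : Type*} [Fintype ι] {μ : ι → Measure ℝ} (a b : ι → ℝ)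

lemma hasGaussianLaw_linearForms_pi [∀ i, IsGaussian (μ i)] :
    HasGaussianLaw (fun z ↦ (∑ i, a i * z i, ∑ i, b i * z i)) (Measure.pi μ) := by
  have coordinates : HasGaussianLaw (fun z : ι → ℝ ↦ (z ·)) (Measure.pi μ) :=
    iIndepFun.hasGaussianLaw
      (fun i ↦ (measurePreserving_eval μ i).hasLaw.hasGaussianLaw)
      (iIndepFun_pi (X := fun _ ↦ id) fun _ ↦ aemeasurable_id)
  let form (c : ι → ℝ) : (ι → ℝ) →L[ℝ] ℝ := ∑ i, c i • ContinuousLinearMap.proj i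
  convert! coordinates.map_fun ((form a).prod (form b)) using 2
  simp [form]

lemma integral_linearForm_pi [∀ i, IsProbabilityMeasure (μ i)] (hμ : ∀ i, Integrable id (μ i)) :
    ∫ z, ∑ i, a i * z i ∂Measure.pi μ = ∑ i, a i * ∫ x, x ∂μ i := by
  rw [integral_finsetSum _ fun i _ ↦ (integrable_eval (hμ i)).const_mul _]
  simp only [integral_const_mul, integral_eval]

lemma covariance_linearForm_linearForm_pi [∀ i, IsProbabilityMeasure (μ i)]
    (hμ : ∀ i, MemLp id 2 (μ i)) :
    cov[fun z ↦ ∑ i, a i * z i, fun z ↦ ∑ i, b i * z i; Measure.pi μ] =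
      ∑ i, a i * b i * Var[id; μ i] := by
  classical
  have memLp_coord (i : ι) : MemLp (fun z : ι → ℝ ↦ z i) 2 (Measure.pi μ) :=
    (hμ i).comp_measurePreserving (measurePreserving_eval μ i)
  have variance_coord (i : ι) : Var[fun z : ι → ℝ ↦ z i; Measure.pi μ] = Var[id; μ i] :=
    (measurePreserving_eval μ i).variance_fun_comp aemeasurable_id
  have covariance_coord (i j : ι) :
      cov[fun z : ι → ℝ ↦ z i, fun z ↦ z j; Measure.pi μ] = if i = j then Var[id; μ i] else 0 := by
    split_ifs with hij
    · rw [← hij, covariance_self (measurable_pi_apply i).aemeasurable, variance_coord]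
    · exact ((iIndepFun_pi (X := fun _ ↦ id) fun _ ↦ aemeasurable_id).indepFun
        hij).covariance_eq_zero (memLp_coord i) (memLp_coord j)
  rw [covariance_fun_sum_fun_sum (fun i ↦ (memLp_coord i).const_mul _)
    fun j ↦ (memLp_coord j).const_mul _]
  simp only [covariance_const_mul_left, covariance_const_mul_right, covariance_coord, mul_ite,
    mul_zero, Finset.sum_ite_eq, Finset.mem_univ, if_true]
  exact Finset.sum_congr rfl fun i _ ↦ by ring

end LinearForms

section StandardGaussian

variable {ι : Type*} [Fintype ι] (a b : ι → ℝ)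

lemma integral_linearForm_pi_gaussianReal :
    ∫ z, ∑ i, a i * z i ∂(Measure.pi fun _ : ι ↦ gaussianReal 0 1) = 0 := by
  simp only [integral_linearForm_pi a fun _ ↦ IsGaussian.integrable_id, integral_id_gaussianReal,
    mul_zero, Finset.sum_const_zero]

lemma covariance_linearForm_linearForm_pi_gaussianReal :
    cov[fun z ↦ ∑ i, a i * z i, fun z ↦ ∑ i, b i * z i;
      Measure.pi fun _ : ι ↦ gaussianReal 0 1] = ∑ i, a i * b i := by
  simp only [covariance_linearForm_linearForm_pi a b fun _ ↦ IsGaussian.memLp_two_id,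
    variance_id_gaussianReal, NNReal.coe_one, mul_one]

lemma variance_linearForm_pi_gaussianReal :
    Var[fun z ↦ ∑ i, a i * z i; Measure.pi fun _ : ι ↦ gaussianReal 0 1] = ∑ i, a i ^ 2 := by
  have form_measurable : Measurable fun z : ι → ℝ ↦ ∑ i, a i * z i := by fun_prop
  rw [← covariance_self form_measurable.aemeasurable,
    covariance_linearForm_linearForm_pi_gaussianReal]
  simp only [sq]

end StandardGaussian

section General

variable {Ω : Type*} {mΩ : MeasurableSpace Ω} {P : Measure Ω} {X Y : Ω → ℝ}

lemma map_prodMk_eq_map_gaussianReal_prod (hXY : HasGaussianLaw (fun ω ↦ (X ω, Y ω)) P)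
    (hX : P[X] = 0) (hY : P[Y] = 0) {σ τ θ : ℝ} (hσ : Var[X; P] = σ ^ 2) (hτ : Var[Y; P] = τ ^ 2)
    (hcov : cov[X, Y; P] = σ * τ * Real.cos θ) :
    P.map (fun ω ↦ (X ω, Y ω)) = ((gaussianReal 0 1).prod (gaussianReal 0 1)).map
      (fun p ↦ (σ * p.1, τ * (Real.cos θ * p.1 + Real.sin θ * p.2))) := by
  let a : Fin 2 → ℝ := ![σ, 0]
  let b : Fin 2 → ℝ := ![τ * Real.cos θ, τ * Real.sin θ]
  have law : P.map (fun ω ↦ (X ω, Y ω)) = (Measure.pi fun _ : Fin 2 ↦ gaussianReal 0 1).map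
      (fun z ↦ (∑ i, a i * z i, ∑ i, b i * z i)) := by
    refine map_prodMk_eq_of_hasGaussianLaw hXY (hasGaussianLaw_linearForms_pi a b) ?_ ?_ ?_ ?_ ?_
    · rw [hX, integral_linearForm_pi_gaussianReal]
    · rw [hY, integral_linearForm_pi_gaussianReal]
    · rw [hσ, variance_linearForm_pi_gaussianReal]
      simp [a]
    · rw [hτ, variance_linearForm_pi_gaussianReal]
      simp only [b, Fin.sum_univ_two, Matrix.cons_val]
      linear_combination -τ ^ 2 * Real.sin_sq_add_cos_sq θ
    · rw [hcov, covariance_linearForm_linearForm_pi_gaussianReal]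
      simp [a, b, mul_assoc]
  rw [law, ← (measurePreserving_finTwoArrow (gaussianReal 0 1)).map_eq,
    Measure.map_map (by fun_prop) (by fun_prop)]
  congr 1
  ext z <;> simp [a, b, mul_add, mul_assoc]

lemma integral_relu_mul_relu_of_hasGaussianLaw (hXY : HasGaussianLaw (fun ω ↦ (X ω, Y ω)) P)
    (hX : P[X] = 0) (hY : P[Y] = 0) {θ : ℝ} (hθ₀ : 0 ≤ θ) (hθπ : θ ≤ π)
    (hcov : cov[X, Y; P] = √Var[X; P] * √Var[Y; P] * Real.cos θ) :
    ∫ ω, relu (X ω) * relu (Y ω) ∂P =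
      √Var[X; P] * √Var[Y; P] * (((π - θ) * Real.cos θ + Real.sin θ) / (2 * π)) := by
  have law := map_prodMk_eq_map_gaussianReal_prod hXY hX hY
    (Real.sq_sqrt (variance_nonneg X P)).symm (Real.sq_sqrt (variance_nonneg Y P)).symm hcov
  have relu_mul_relu_continuous : Continuous fun q : ℝ × ℝ ↦ relu q.1 * relu q.2 := by fun_prop
  calc
    ∫ ω, relu (X ω) * relu (Y ω) ∂P
      = ∫ q, relu q.1 * relu q.2 ∂P.map (fun ω ↦ (X ω, Y ω)) :=
        (integral_map hXY.aemeasurable relu_mul_relu_continuous.aestronglyMeasurable).symm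
    _ = ∫ p : ℝ × ℝ, relu (√Var[X; P] * p.1) *
          relu (√Var[Y; P] * (Real.cos θ * p.1 + Real.sin θ * p.2))
          ∂(gaussianReal 0 1).prod (gaussianReal 0 1) := by
        rw [law, integral_map (by fun_prop) relu_mul_relu_continuous.aestronglyMeasurable]
    _ = √Var[X; P] * √Var[Y; P] * (((π - θ) * Real.cos θ + Real.sin θ) / (2 * π)) := by
        simp only [relu_mul_of_nonneg (Real.sqrt_nonneg _), mul_mul_mul_comm _ (relu _)]
        rw [integral_const_mul, integral_relu_mul_relu_gaussianReal_prod hθ₀ hθπ]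

theorem relu_cross_moment_general (hXY : HasGaussianLaw (fun ω ↦ (X ω, Y ω)) P)
    (hX : P[X] = 0) (hY : P[Y] = 0) (hVarX : Var[X; P] ≠ 0) (hVarY : Var[Y; P] ≠ 0) {γ : ℝ}
    (hγ : γ = cov[X, Y; P] / (√Var[X; P] * √Var[Y; P])) :
    2 * ∫ ω, relu (X ω) * relu (Y ω) ∂P =
      √Var[X; P] * √Var[Y; P] * ((√(1 - γ ^ 2) + (π - Real.arccos γ) * γ) / π) := by
  have := hXY.isProbabilityMeasure
  have sdX_pos : 0 < √Var[X; P] := Real.sqrt_pos.2 ((variance_nonneg X P).lt_of_ne' hVarX)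
  have sdY_pos : 0 < √Var[Y; P] := Real.sqrt_pos.2 ((variance_nonneg Y P).lt_of_ne' hVarY)
  have γ_sq_le_one : γ ^ 2 ≤ 1 := by
    rw [hγ, div_pow, mul_pow, Real.sq_sqrt (variance_nonneg X P),
      Real.sq_sqrt (variance_nonneg Y P)]
    exact div_le_one_of_le₀ (sq_covariance_le_variance_mul_variance hXY.fst.memLp_two
      hXY.snd.memLp_two) (mul_nonneg (variance_nonneg X P) (variance_nonneg Y P))
  obtain ⟨neg_one_le_γ, γ_le_one⟩ := abs_le.1 ((sq_le_one_iff_abs_le_one γ).1 γ_sq_le_one)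
  have cos_angle := Real.cos_arccos neg_one_le_γ γ_le_one
  have hcov : cov[X, Y; P] = √Var[X; P] * √Var[Y; P] * Real.cos (Real.arccos γ) := by
    rw [cos_angle, hγ, mul_div_cancel₀ _ (mul_pos sdX_pos sdY_pos).ne']
  rw [integral_relu_mul_relu_of_hasGaussianLaw hXY hX hY (Real.arccos_nonneg γ)
    (Real.arccos_le_pi γ) hcov, cos_angle, Real.sin_arccos]
  field_simp
  ring

end General

lemma sum_sq_ne_zero {ι : Type*} [Fintype ι] {a : ι → ℝ} (ha : a ≠ 0) : ∑ i, a i ^ 2 ≠ 0 := by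
  rw [Ne, Finset.sum_eq_zero_iff_of_nonneg fun i _ ↦ sq_nonneg (a i)]
  exact fun h ↦ ha (funext fun i ↦ pow_eq_zero_iff two_ne_zero |>.1 (h i (Finset.mem_univ i)))

/-- correlation of two rectified Gaussian linear forms. -/
theorem relu_cross_moment (d : ℕ) (hd : 1 ≤ d) (a b : Fin d → ℝ)
    (ha : a ≠ 0) (hb : b ≠ 0) (γ : ℝ)
    (hγ : γ = (∑ i, a i * b i) /
      (Real.sqrt (∑ i, a i ^ 2) * Real.sqrt (∑ i, b i ^ 2))) :
    2 * (∫ z : Fin d → ℝ, relu (∑ i, a i * z i) * relu (∑ i, b i * z i)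
        ∂(Measure.pi fun _ : Fin d => gaussianReal 0 1)) =
      Real.sqrt (∑ i, a i ^ 2) * Real.sqrt (∑ i, b i ^ 2) *
        ((Real.sqrt (1 - γ ^ 2) + (Real.pi - Real.arccos γ) * γ) / Real.pi) := by
  rw [← variance_linearForm_pi_gaussianReal a, ← variance_linearForm_pi_gaussianReal b] at hγ ⊢
  rw [← covariance_linearForm_linearForm_pi_gaussianReal a b] at hγ
  exact relu_cross_moment_general (hasGaussianLaw_linearForms_pi a b)
    (integral_linearForm_pi_gaussianReal a) (integral_linearForm_pi_gaussianReal b)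
    (variance_linearForm_pi_gaussianReal a ▸ sum_sq_ne_zero ha)
    (variance_linearForm_pi_gaussianReal b ▸ sum_sq_ne_zero hb) hγ
end

section
/- Let a, b ∈ ℝ^d be nonzero vectors and set γ := ⟨a, b⟩ / (‖a‖ ‖b‖). Then (1/2) ‖a − b‖² − ‖a‖ ‖b‖ · (√(1 − γ²) − γ arccos(γ)) / π ≥ (1/4) ‖a − b‖². -/
/-!
Put `θ = arccos γ`. Since `2 ‖a‖ ‖b‖ (1 - cos θ) ≤ ‖a - b‖²`, it suffices that
`sin θ - θ cos θ ≤ (π / 2) (1 - cos θ)` on `[0, π]`. Recentring at `θ = π / 2 + s` cancels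
`(π / 2) sin s` from both sides and leaves `cos s + s sin s ≤ π / 2`. The left side is even in `s`,
and for `0 ≤ s ≤ π / 2` the bound follows from `cos s = sin (π / 2 - s) ≤ π / 2 - s` and
`sin s ≤ 1`.
-/

open Real
open scoped RealInnerProductSpace

theorem cos_add_mul_sin_le_pi_div_two {s : ℝ} (hs : |s| ≤ π / 2) : cos s + s * sin s ≤ π / 2 := by
  wlog hs_nonneg : 0 ≤ s generalizing s
  · simpa using this (s := -s) (by rwa [abs_neg]) (by linarith)
  have hcos : cos s ≤ π / 2 - s := by
    rw [← sin_pi_div_two_sub]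
    exact sin_le (sub_nonneg.2 (abs_le.1 hs).2)
  have hsin : s * sin s ≤ s := mul_le_of_le_one_right hs_nonneg (sin_le_one s)
  linarith

theorem sin_sub_mul_cos_le {θ : ℝ} (hθ_nonneg : 0 ≤ θ) (hθ_le : θ ≤ π) :
    sin θ - θ * cos θ ≤ π / 2 * (1 - cos θ) := by
  have h := cos_add_mul_sin_le_pi_div_two (s := θ - π / 2) (abs_le.2 ⟨by linarith, by linarith⟩)
  rw [cos_sub_pi_div_two, sin_sub_pi_div_two] at h
  linarith

theorem sqrt_one_sub_sq_sub_mul_arccos_div_pi_le {γ : ℝ} (hγ : |γ| ≤ 1) :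
    (√(1 - γ ^ 2) - γ * arccos γ) / π ≤ (1 - γ) / 2 := by
  have h := sin_sub_mul_cos_le (arccos_nonneg γ) (arccos_le_pi γ)
  rw [sin_arccos, cos_arccos (abs_le.1 hγ).1 (abs_le.1 hγ).2] at h
  rw [div_le_iff₀ pi_pos]
  linarith

section InnerProductSpace

variable {E : Type*} [SeminormedAddCommGroup E] [InnerProductSpace ℝ E]

theorem norm_mul_norm_sub_real_inner_le (a b : E) : ‖a‖ * ‖b‖ - ⟪a, b⟫ ≤ ‖a - b‖ ^ 2 / 2 := by
  linarith [norm_sub_sq_real a b, two_mul_le_add_sq ‖a‖ ‖b‖]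

theorem norm_mul_norm_mul_real_inner_div (a b : E) :
    ‖a‖ * ‖b‖ * (⟪a, b⟫ / (‖a‖ * ‖b‖)) = ⟪a, b⟫ := by
  refine mul_div_cancel_of_imp' fun h => ?_
  simpa [h] using abs_real_inner_le_norm a b

theorem relu_kernel_quarter_bound_general {a b : E} {γ : ℝ} (hγ : γ = ⟪a, b⟫ / (‖a‖ * ‖b‖)) :
    (1 / 2) * ‖a - b‖ ^ 2 - ‖a‖ * ‖b‖ * ((√(1 - γ ^ 2) - γ * arccos γ) / π) ≥
      (1 / 4) * ‖a - b‖ ^ 2 := by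
  have hγ_abs : |γ| ≤ 1 := hγ ▸ abs_real_inner_div_norm_mul_norm_le_one a b
  have hkernel : ‖a‖ * ‖b‖ * ((√(1 - γ ^ 2) - γ * arccos γ) / π) ≤ ‖a - b‖ ^ 2 / 4 :=
    calc ‖a‖ * ‖b‖ * ((√(1 - γ ^ 2) - γ * arccos γ) / π)
      _ ≤ ‖a‖ * ‖b‖ * ((1 - γ) / 2) :=
        mul_le_mul_of_nonneg_left (sqrt_one_sub_sq_sub_mul_arccos_div_pi_le hγ_abs) (by positivity)
      _ = (‖a‖ * ‖b‖ - ⟪a, b⟫) / 2 := by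
        rw [← norm_mul_norm_mul_real_inner_div a b, ← hγ]
        ring
      _ ≤ ‖a - b‖ ^ 2 / 4 := by linarith [norm_mul_norm_sub_real_inner_le a b]
  linarith

end InnerProductSpace

/-- the key deterministic inequality comparing the ReLU kernel expression
with a quarter of the squared Euclidean distance. -/
theorem relu_kernel_quarter_bound (d : ℕ) (a b : Fin d → ℝ)
    (ha : a ≠ 0) (hb : b ≠ 0) (γ : ℝ)
    (hγ : γ = (∑ i, a i * b i) /
      (Real.sqrt (∑ i, a i ^ 2) * Real.sqrt (∑ i, b i ^ 2))) :
    (1 / 2) * (∑ i, (a i - b i) ^ 2) -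
        Real.sqrt (∑ i, a i ^ 2) * Real.sqrt (∑ i, b i ^ 2) *
          ((Real.sqrt (1 - γ ^ 2) - γ * Real.arccos γ) / Real.pi) ≥
      (1 / 4) * (∑ i, (a i - b i) ^ 2) := by
  have hγ' : γ = ⟪WithLp.toLp 2 a, WithLp.toLp 2 b⟫ / (‖WithLp.toLp 2 a‖ * ‖WithLp.toLp 2 b‖) := by
    simpa [EuclideanSpace.norm_eq, EuclideanSpace.inner_toLp_toLp, dotProduct, mul_comm] using hγ
  simpa [EuclideanSpace.norm_eq, sq_sqrt, Finset.sum_nonneg, sq_nonneg] using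
    relu_kernel_quarter_bound_general hγ'
end

section
/- In the linear transfer learning model (d, k ≥ 1, σ > 0, Σ_T ∈ ℝ^{d×d} positive definite with A_T A_Tᵀ = Σ_T; for W ∈ ℝ^{k×d}, Q_W is the law on ℝ^d × ℝ^k of (A_T z, W A_T z + σ w) with (z, w) a standard Gaussian vector in ℝ^{d+k}; P_W the analogous source law with positive semidefinite Σ_S; ρ(W₁, W₂) := √(trace((W₁ − W₂) Σ_T (W₁ − W₂)ᵀ)); D := d·k − 1), assume D ≥ 20, n_S, n_T ≥ 1, and Δ ≥ √(σ²D·log 2 / n_T). Then for every measurable estimator Ŵ : ((ℝ^d × ℝ^k)^{n_S}) × ((ℝ^d × ℝ^k)^{n_T}) → ℝ^{k×d}, the supremum over all pairs (W_S, W_T) with ρ(W_S, W_T) ≤ Δ of E_{s ∼ P_{W_S}^{⊗n_S}, t ∼ Q_{W_T}^{⊗n_T}}[ ρ(Ŵ(s,t), W_T)² ] is at least σ²D / (256 n_T). -/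
open MeasureTheory ProbabilityTheory Matrix

/-- The transfer distance `ρ(W₁, W₂) = ‖Σ_T^{1/2}(W₁ − W₂)ᵀ‖_F`. -/
noncomputable def rho {k d : ℕ} (SigT : Matrix (Fin d) (Fin d) ℝ)
    (W1 W2 : Matrix (Fin k) (Fin d) ℝ) : ℝ :=
  Real.sqrt ((W1 - W2) * SigT * (W1 - W2)ᵀ).trace

/-- The joint law of `(A z, W A z + σ w)` where `(z, w)` is a standard Gaussian vector in
`ℝ^{d+k}`. -/
noncomputable def linLaw (d k : ℕ) (σ : ℝ) (A : Matrix (Fin d) (Fin d) ℝ)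
    (W : Matrix (Fin k) (Fin d) ℝ) : Measure ((Fin d → ℝ) × (Fin k → ℝ)) :=
  Measure.map
    (fun zw : (Fin d → ℝ) × (Fin k → ℝ) =>
      (A.mulVec zw.1, W.mulVec (A.mulVec zw.1) + σ • zw.2))
    ((Measure.pi fun _ : Fin d => gaussianReal 0 1).prod
      (Measure.pi fun _ : Fin k => gaussianReal 0 1))

/-! In the whitened coordinate `V = W * A_T` the loss is the squared Euclidean distance, and the
source sample carries no information about `W_T` as long as `W_S = 0` is kept fixed. So let `V`
range over the sign matrices with entries `±δ`, all of which are within `Δ` of `0` when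
`d k δ² ≤ Δ²`, and apply Assouad's lemma. Changing one sign costs `ρ² = 4δ²`; given the design, it
is absorbed by a shift `s` of the Gaussian noise, whose Cameron–Martin density is at least
`exp (-|s|² / 2)` on a half-space of probability at least `1 / 2`. The mean of `|s|²` over the
design is `4 n_T δ² / σ² ≤ 1`, so no test separates the two neighbours reliably and each coordinate
contributes a fixed fraction of `δ²` to the risk. -/

open scoped ENNReal

/-- The law of a standard Gaussian vector with coordinates indexed by `ι`. Unlike
`ProbabilityTheory.stdGaussian` it lives on the function type `ι → ℝ`, as `linLaw` does. -/
noncomputable abbrev stdGaussianPi (ι : Type*) [Fintype ι] : Measure (ι → ℝ) :=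
  Measure.pi fun _ => gaussianReal 0 1

section ProductDensity

variable {ι : Type*} [Fintype ι] {E : ι → Type*} [∀ i, MeasurableSpace (E i)]
  (μ : ∀ i, Measure (E i)) [∀ i, IsProbabilityMeasure (μ i)] {f : ∀ i, E i → ℝ≥0∞}

theorem lintegral_pi_prod_eval (hf : ∀ i, Measurable (f i)) :
    ∫⁻ x, ∏ i, f i (x i) ∂Measure.pi μ = ∏ i, ∫⁻ x, f i x ∂μ i := by
  rw [lintegral_prod_eq_prod_lintegral_of_indepFun Finset.univ
    (fun i (x : ∀ i, E i) => f i (x i))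
    (iIndepFun_pi fun i => (hf i).aemeasurable) (fun i => by fun_prop)]
  exact Finset.prod_congr rfl fun i _ => (measurePreserving_eval μ i).lintegral_comp (hf i)

theorem pi_withDensity [∀ i, SigmaFinite ((μ i).withDensity (f i))]
    (hf : ∀ i, Measurable (f i)) :
    Measure.pi (fun i => (μ i).withDensity (f i)) =
      (Measure.pi μ).withDensity fun x => ∏ i, f i (x i) := by
  refine Measure.pi_eq fun s hs => ?_
  have indicator_prod : (Set.univ.pi s).indicator (fun x => ∏ i, f i (x i)) =
      fun x => ∏ i, (s i).indicator (f i) (x i) := by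
    ext x
    by_cases hx : ∀ i, x i ∈ s i
    · simp [hx]
    · obtain ⟨i, hi⟩ := not_forall.1 hx
      rw [Set.indicator_of_notMem (by simpa using hx),
        Finset.prod_eq_zero (Finset.mem_univ i) (Set.indicator_of_notMem hi _)]
  rw [withDensity_apply _ (.univ_pi hs), ← lintegral_indicator (.univ_pi hs), indicator_prod,
    lintegral_pi_prod_eval μ fun i => (hf i).indicator (hs i)]
  exact Finset.prod_congr rfl fun i _ => by
    rw [withDensity_apply _ (hs i), lintegral_indicator (hs i)]

end ProductDensity

section CameronMartin

theorem gaussianReal_map_add_const_eq_withDensity (s : ℝ) :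
    (gaussianReal 0 1).map (· + s) =
      (gaussianReal 0 1).withDensity fun x => ENNReal.ofReal (Real.exp (s * x - s * s / 2)) := by
  rw [gaussianReal_map_add_const, gaussianReal_of_var_ne_zero _ one_ne_zero,
    gaussianReal_of_var_ne_zero _ one_ne_zero, ← withDensity_mul _ (by fun_prop) (by fun_prop)]
  congr with x
  simp only [Pi.mul_apply, gaussianPDF, gaussianPDFReal]
  rw [← ENNReal.ofReal_mul (by positivity), mul_assoc (_⁻¹) (Real.exp _), ← Real.exp_add]
  congr 3
  norm_num
  ring

variable {ι : Type*} [Fintype ι]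

theorem stdGaussianPi_map_add_const (s : ι → ℝ) :
    (stdGaussianPi ι).map (· + s) =
      (stdGaussianPi ι).withDensity fun x => ENNReal.ofReal (Real.exp (s ⬝ᵥ x - s ⬝ᵥ s / 2)) := by
  have coord (i : ι) := gaussianReal_map_add_const_eq_withDensity (s i)
  have (i : ι) : IsProbabilityMeasure ((gaussianReal 0 1).withDensity
      fun x => ENNReal.ofReal (Real.exp (s i * x - s i * s i / 2))) :=
    coord i ▸ Measure.isProbabilityMeasure_map (by fun_prop)
  calc (stdGaussianPi ι).map (· + s)
      = Measure.pi fun i => (gaussianReal 0 1).map (· + s i) :=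
        have (i : ι) : IsProbabilityMeasure ((gaussianReal 0 1).map (· + s i)) :=
          Measure.isProbabilityMeasure_map (by fun_prop)
        Measure.pi_map_pi (μ := fun _ => gaussianReal 0 1) (f := fun i x => x + s i)
          fun _ => by fun_prop
    _ = (stdGaussianPi ι).withDensity
          fun x => ∏ i, ENNReal.ofReal (Real.exp (s i * x i - s i * s i / 2)) := by
        simp_rw [coord]
        exact pi_withDensity _ fun i => by fun_prop
    _ = _ := by
        congr with x
        rw [← ENNReal.ofReal_prod_of_nonneg fun _ _ => by positivity, ← Real.exp_sum,
          Finset.sum_sub_distrib, ← Finset.sum_div]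
        rfl

theorem ofReal_exp_neg_mul_setLIntegral_le_lintegral (s : ι → ℝ) {g : (ι → ℝ) → ℝ≥0∞}
    (hg : Measurable g) :
    ENNReal.ofReal (Real.exp (-(s ⬝ᵥ s / 2))) * ∫⁻ x in {x | s ⬝ᵥ x ≤ 0}, g (x + s)
      ∂stdGaussianPi ι ≤ ∫⁻ x, g x ∂stdGaussianPi ι := by
  have hs (c : ℝ) : MeasurableSet {x | s ⬝ᵥ x ≤ c} := by
    refine measurableSet_le ?_ measurable_const
    unfold dotProduct
    fun_prop
  have hdens : Measurable fun x => ENNReal.ofReal (Real.exp (s ⬝ᵥ x - s ⬝ᵥ s / 2)) := by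
    unfold dotProduct
    fun_prop
  have preimage_halfSpace : {x | s ⬝ᵥ x ≤ 0} = (· + s) ⁻¹' {x | s ⬝ᵥ x ≤ s ⬝ᵥ s} := by
    ext x
    simp [dotProduct_add]
  rw [preimage_halfSpace, ← setLIntegral_map (hs _) hg (by fun_prop), stdGaussianPi_map_add_const,
    setLIntegral_withDensity_eq_setLIntegral_mul _ hdens hg (hs _),
    ← lintegral_const_mul _ (hdens.mul hg)]
  refine (setLIntegral_mono hg fun x hx => ?_).trans (setLIntegral_le_lintegral _ _)
  rw [Pi.mul_apply, ← mul_assoc, ← ENNReal.ofReal_mul (by positivity), ← Real.exp_add]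
  refine mul_le_of_le_one_left' (ENNReal.ofReal_le_one.2 (Real.exp_le_one_iff.2 ?_))
  linarith [Set.mem_ofPred.1 hx]

instance : (gaussianReal 0 1).IsNegInvariant :=
  ⟨gaussianReal_map_neg.trans (by rw [neg_zero])⟩

theorem one_half_le_stdGaussianPi_halfSpace (s : ι → ℝ) :
    1 / 2 ≤ stdGaussianPi ι {x | s ⬝ᵥ x ≤ 0} := by
  have reflect : stdGaussianPi ι {x | 0 ≤ s ⬝ᵥ x} = stdGaussianPi ι {x | s ⬝ᵥ x ≤ 0} := by
    rw [← Measure.measure_preimage_neg]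
    simp
  have cover : (1 : ℝ≥0∞) ≤ 2 * stdGaussianPi ι {x | s ⬝ᵥ x ≤ 0} :=
    calc (1 : ℝ≥0∞) = stdGaussianPi ι ({x | s ⬝ᵥ x ≤ 0} ∪ {x | 0 ≤ s ⬝ᵥ x}) := by
          rw [← measure_univ (μ := stdGaussianPi ι)]
          congr
          ext x
          simp [le_total]
      _ ≤ stdGaussianPi ι {x | s ⬝ᵥ x ≤ 0} + stdGaussianPi ι {x | 0 ≤ s ⬝ᵥ x} :=
          measure_union_le _ _
      _ = 2 * stdGaussianPi ι {x | s ⬝ᵥ x ≤ 0} := by rw [reflect, two_mul]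
  exact ENNReal.div_le_of_le_mul' cover

theorem stdGaussianPi_two_point (s : ι → ℝ) {f g : (ι → ℝ) → ℝ≥0∞} (hf : Measurable f)
    (hg : Measurable g) {m : ℝ≥0∞} (hfg : ∀ x, m ≤ f x + g (x + s)) :
    ENNReal.ofReal (Real.exp (-(s ⬝ᵥ s / 2))) * (m / 2) ≤
      ∫⁻ x, f x ∂stdGaussianPi ι + ∫⁻ x, g x ∂stdGaussianPi ι := by
  set H : Set (ι → ℝ) := {x | s ⬝ᵥ x ≤ 0}
  set c := ENNReal.ofReal (Real.exp (-(s ⬝ᵥ s / 2)))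
  have hc : c ≤ 1 := by
    refine ENNReal.ofReal_le_one.2 (Real.exp_le_one_iff.2 ?_)
    linarith [show 0 ≤ s ⬝ᵥ s from Finset.sum_nonneg fun i _ => mul_self_nonneg (s i)]
  calc c * (m / 2)
      ≤ c * (m * stdGaussianPi ι H) := by
        rw [div_eq_mul_one_div]
        gcongr
        exact one_half_le_stdGaussianPi_halfSpace s
    _ = c * ∫⁻ _ in H, m ∂stdGaussianPi ι := by rw [setLIntegral_const]
    _ ≤ c * ∫⁻ x in H, (f x + g (x + s)) ∂stdGaussianPi ι := by gcongr with x; exact hfg x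
    _ = c * ∫⁻ x in H, f x ∂stdGaussianPi ι + c * ∫⁻ x in H, g (x + s) ∂stdGaussianPi ι := by
        rw [lintegral_add_left hf, mul_add]
    _ ≤ _ := add_le_add
        ((mul_le_of_le_one_left' hc).trans (setLIntegral_le_lintegral _ _))
        (ofReal_exp_neg_mul_setLIntegral_le_lintegral s hg)

theorem lintegral_ofReal_dotProduct_sq_stdGaussianPi (v : ι → ℝ) :
    ∫⁻ x, ENNReal.ofReal ((v ⬝ᵥ x) ^ 2) ∂stdGaussianPi ι = ENNReal.ofReal (v ⬝ᵥ v) := by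
  have memLp_coord (i : ι) : MemLp (fun x : ℝ => v i * x) 2 (gaussianReal 0 1) :=
    (memLp_id_gaussianReal 2).const_mul (v i)
  have memLp_eval (i : ι) : MemLp (fun x : ι → ℝ => v i * x i) 2 (stdGaussianPi ι) :=
    (memLp_coord i).comp_measurePreserving (measurePreserving_eval _ i)
  have memLp_dot : MemLp (v ⬝ᵥ ·) 2 (stdGaussianPi ι) := memLp_finsetSum _ fun i _ => memLp_eval i
  have mean_zero : ∫ x, v ⬝ᵥ x ∂stdGaussianPi ι = 0 := by
    simp only [dotProduct]
    rw [integral_finsetSum _ fun i _ => (memLp_eval i).integrable one_le_two]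
    refine Finset.sum_eq_zero fun i _ => ?_
    rw [integral_comp_eval (μ := fun _ => gaussianReal 0 1) (f := fun x : ℝ => v i * x)
      (by fun_prop), integral_const_mul,
      integral_id_gaussianReal, mul_zero]
  have variance_dot : Var[(v ⬝ᵥ ·); stdGaussianPi ι] = v ⬝ᵥ v := by
    have sum_eq : (v ⬝ᵥ ·) = ∑ i, fun x : ι → ℝ => v i * x i := by
      ext x
      simp [dotProduct]
    rw [sum_eq, variance_sum_pi memLp_coord]
    refine Finset.sum_congr rfl fun i _ => ?_
    rw [variance_const_mul, variance_fun_id_gaussianReal, NNReal.coe_one, mul_one, pow_two]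
  rw [← ofReal_integral_eq_lintegral_ofReal memLp_dot.integrable_sq
      (ae_of_all _ fun _ => sq_nonneg _),
    ← variance_of_integral_eq_zero memLp_dot.aemeasurable mean_zero, variance_dot]

end CameronMartin

section Mixture

variable {X Y : Type*} [MeasurableSpace X] [MeasurableSpace Y]

theorem lintegral_le_lintegral_prod_add_lintegral_prod {ν : Measure X} {μ₁ μ₂ : Measure Y}
    [SFinite μ₁] [SFinite μ₂] {f g : X × Y → ℝ≥0∞} (hf : Measurable f) (hg : Measurable g)
    {c : X → ℝ≥0∞} (hc : ∀ x, c x ≤ ∫⁻ y, f (x, y) ∂μ₁ + ∫⁻ y, g (x, y) ∂μ₂) :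
    ∫⁻ x, c x ∂ν ≤ ∫⁻ p, f p ∂ν.prod μ₁ + ∫⁻ p, g p ∂ν.prod μ₂ := by
  rw [lintegral_prod _ hf.aemeasurable, lintegral_prod _ hg.aemeasurable,
    ← lintegral_add_left hf.lintegral_prod_right']
  exact lintegral_mono hc

theorem one_sub_lintegral_le_lintegral_exp_neg (μ : Measure X) [IsProbabilityMeasure μ]
    {q : X → ℝ} (hq : Measurable q) :
    1 - ∫⁻ x, ENNReal.ofReal (q x) ∂μ ≤ ∫⁻ x, ENNReal.ofReal (Real.exp (-q x)) ∂μ := by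
  rw [tsub_le_iff_right, ← lintegral_add_left (by fun_prop)]
  calc (1 : ℝ≥0∞) = ∫⁻ _, 1 ∂μ := by simp
    _ ≤ _ := lintegral_mono fun x => ?_
  refine le_trans ?_ ENNReal.ofReal_add_le
  rw [ENNReal.one_le_ofReal]
  linarith [Real.add_one_le_exp (-q x)]

end Mixture

section LinearModel

variable {d k n : ℕ} {σ : ℝ} {A : Matrix (Fin d) (Fin d) ℝ} {W W₁ W₂ : Matrix (Fin k) (Fin d) ℝ}

instance : IsProbabilityMeasure (linLaw d k σ A W) :=
  Measure.isProbabilityMeasure_map (Continuous.aemeasurable (by fun_prop))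

theorem rho_sq_eq_sum :
    rho (A * Aᵀ) W₁ W₂ ^ 2 = ∑ p : Fin k × Fin d, ((W₁ * A) p.1 p.2 - (W₂ * A) p.1 p.2) ^ 2 := by
  have gram : (W₁ - W₂) * (A * Aᵀ) * (W₁ - W₂)ᵀ = (W₁ * A - W₂ * A) * (W₁ * A - W₂ * A)ᵀ := by
    rw [← Matrix.sub_mul, Matrix.transpose_mul]
    simp only [Matrix.mul_assoc]
  have trace_eq : ((W₁ - W₂) * (A * Aᵀ) * (W₁ - W₂)ᵀ).trace =
      ∑ p : Fin k × Fin d, ((W₁ * A) p.1 p.2 - (W₂ * A) p.1 p.2) ^ 2 := by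
    rw [gram, Fintype.sum_prod_type]
    generalize W₁ * A = X₁, W₂ * A = X₂
    simp [Matrix.trace, Matrix.mul_apply, pow_two]
  rw [rho, trace_eq, Real.sq_sqrt (by positivity)]

/-- The sample of size `n` in the linear model, as a function of the standardized design
`z` and the noise `w`. -/
def linSample (σ : ℝ) (A : Matrix (Fin d) (Fin d) ℝ) (W : Matrix (Fin k) (Fin d) ℝ)
    (zw : (Fin n → Fin d → ℝ) × (Fin n × Fin k → ℝ)) : Fin n → (Fin d → ℝ) × (Fin k → ℝ) :=
  fun t => (A *ᵥ zw.1 t, W *ᵥ (A *ᵥ zw.1 t) + σ • fun i => zw.2 (t, i))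

theorem measurePreserving_linSample :
    MeasurePreserving (linSample σ A W)
      ((Measure.pi fun _ : Fin n => stdGaussianPi (Fin d)).prod (stdGaussianPi (Fin n × Fin k)))
      (Measure.pi fun _ : Fin n => linLaw d k σ A W) := by
  have curry_noise : MeasurePreserving (MeasurableEquiv.curry (Fin n) (Fin k) ℝ)
      (stdGaussianPi (Fin n × Fin k)) (Measure.pi fun _ : Fin n => stdGaussianPi (Fin k)) := by
    refine ⟨MeasurableEquiv.measurable _, ?_⟩
    simpa only [Measure.infinitePi_eq_pi] using
      Measure.infinitePi_map_curry fun (_ : Fin n) (_ : Fin k) => gaussianReal 0 1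
  have regroup := (measurePreserving_arrowProdEquivProdArrow _ _ (Fin n)
    (fun _ => stdGaussianPi (Fin d)) (fun _ => stdGaussianPi (Fin k))).symm
  have observe (_ : Fin n) : MeasurePreserving
      (fun zw : (Fin d → ℝ) × (Fin k → ℝ) => (A *ᵥ zw.1, W *ᵥ (A *ᵥ zw.1) + σ • zw.2))
      ((stdGaussianPi (Fin d)).prod (stdGaussianPi (Fin k))) (linLaw d k σ A W) :=
    ⟨Continuous.measurable (by fun_prop), rfl⟩
  exact (measurePreserving_pi _ _ observe).comp
    (regroup.comp ((MeasurePreserving.id _).prod curry_noise))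

/-- The vector with blocks `R z₁, …, R zₙ`: the noise shift that absorbs a change of the
regression matrix when `R` is the rescaled difference of the two matrices. -/
def stackedMulVec (R : Matrix (Fin k) (Fin d) ℝ) (z : Fin n → Fin d → ℝ) : Fin n × Fin k → ℝ :=
  fun p => (R *ᵥ z p.1) p.2

theorem linSample_add_stackedMulVec (hσ : σ ≠ 0) (z : Fin n → Fin d → ℝ)
    (w : Fin n × Fin k → ℝ) :
    linSample σ A W₂ (z, w + stackedMulVec (σ⁻¹ • (W₁ * A - W₂ * A)) z) =
      linSample σ A W₁ (z, w) := by
  ext t i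
  · rfl
  · simp only [linSample, stackedMulVec, Pi.add_apply, Pi.smul_apply, smul_eq_mul,
      Matrix.smul_mulVec, Matrix.sub_mulVec, Matrix.mulVec_mulVec, Pi.sub_apply]
    field_simp
    ring

theorem lintegral_stackedMulVec_dotProduct_self (R : Matrix (Fin k) (Fin d) ℝ) :
    ∫⁻ z, ENNReal.ofReal (stackedMulVec R z ⬝ᵥ stackedMulVec R z)
        ∂(Measure.pi fun _ : Fin n => stdGaussianPi (Fin d)) =
      ENNReal.ofReal (n * ∑ p : Fin k × Fin d, R p.1 p.2 ^ 2) := by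
  have block (p : Fin n × Fin k) :
      ∫⁻ z, ENNReal.ofReal ((R.row p.2 ⬝ᵥ z p.1) ^ 2)
        ∂(Measure.pi fun _ : Fin n => stdGaussianPi (Fin d)) =
      ENNReal.ofReal (R.row p.2 ⬝ᵥ R.row p.2) := by
    rw [← lintegral_ofReal_dotProduct_sq_stdGaussianPi]
    refine (measurePreserving_eval (fun _ : Fin n => stdGaussianPi (Fin d)) p.1).lintegral_comp
      (f := fun x => ENNReal.ofReal ((R.row p.2 ⬝ᵥ x) ^ 2)) ?_
    exact Measurable.ennreal_ofReal (Continuous.measurable (by fun_prop))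
  have dot_self (z : Fin n → Fin d → ℝ) : stackedMulVec R z ⬝ᵥ stackedMulVec R z =
      ∑ p : Fin n × Fin k, (R.row p.2 ⬝ᵥ z p.1) ^ 2 :=
    Finset.sum_congr rfl fun p _ => (pow_two _).symm
  simp_rw [dot_self, ENNReal.ofReal_sum_of_nonneg fun _ _ => sq_nonneg _]
  rw [lintegral_finsetSum _ fun p _ =>
    Measurable.ennreal_ofReal (Continuous.measurable (by fun_prop))]
  simp_rw [block]
  rw [← ENNReal.ofReal_sum_of_nonneg fun p _ => by
    rw [dotProduct]; exact Finset.sum_nonneg fun j _ => mul_self_nonneg _]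
  simp [Fintype.sum_prod_type, dotProduct, pow_two]

theorem one_half_le_lintegral_exp_neg_stackedMulVec {R : Matrix (Fin k) (Fin d) ℝ}
    (hR : n * ∑ p : Fin k × Fin d, R p.1 p.2 ^ 2 ≤ 1) :
    1 / 2 ≤ ∫⁻ z, ENNReal.ofReal (Real.exp (-(stackedMulVec R z ⬝ᵥ stackedMulVec R z / 2)))
      ∂(Measure.pi fun _ : Fin n => stdGaussianPi (Fin d)) := by
  have measurable_sq : Measurable fun z : Fin n → Fin d → ℝ =>
      stackedMulVec R z ⬝ᵥ stackedMulVec R z := by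
    unfold stackedMulVec
    exact Continuous.measurable (by fun_prop)
  refine le_trans ?_ (one_sub_lintegral_le_lintegral_exp_neg _ (measurable_sq.div_const 2))
  simp_rw [ENNReal.ofReal_div_of_pos two_pos, ENNReal.ofReal_ofNat, div_eq_mul_inv]
  rw [lintegral_mul_const _ measurable_sq.ennreal_ofReal, lintegral_stackedMulVec_dotProduct_self,
    one_mul]
  exact ENNReal.one_sub_inv_two.ge.trans
    (tsub_le_tsub_left (mul_le_of_le_one_left' (ENNReal.ofReal_le_one.2 hR)) 1)

theorem linLaw_two_point (hσ : σ ≠ 0) (hρ : n * rho (A * Aᵀ) W₁ W₂ ^ 2 ≤ σ ^ 2)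
    {f g : (Fin n → (Fin d → ℝ) × (Fin k → ℝ)) → ℝ≥0∞} (hf : Measurable f) (hg : Measurable g)
    {m : ℝ≥0∞} (hfg : ∀ t, m ≤ f t + g t) :
    m / 4 ≤ ∫⁻ t, f t ∂(Measure.pi fun _ : Fin n => linLaw d k σ A W₁) +
      ∫⁻ t, g t ∂(Measure.pi fun _ : Fin n => linLaw d k σ A W₂) := by
  set R := σ⁻¹ • (W₁ * A - W₂ * A) with hR
  have R_le : n * ∑ p : Fin k × Fin d, R p.1 p.2 ^ 2 ≤ 1 := by
    simp only [hR, Matrix.smul_apply, Matrix.sub_apply, smul_eq_mul, mul_pow, ← Finset.mul_sum]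
    rw [← rho_sq_eq_sum, inv_pow, mul_left_comm, inv_mul_le_iff₀ (by positivity), mul_one]
    exact hρ
  have hf' := hf.comp (measurePreserving_linSample (σ := σ) (A := A) (W := W₁)).measurable
  have hg' := hg.comp (measurePreserving_linSample (σ := σ) (A := A) (W := W₂)).measurable
  rw [← measurePreserving_linSample.lintegral_comp hf,
    ← measurePreserving_linSample.lintegral_comp hg]
  calc m / 4 = 1 / 2 * (m / 2) := by
        rw [one_div, ENNReal.div_eq_inv_mul, ENNReal.div_eq_inv_mul, ← mul_assoc,
          ← ENNReal.mul_inv (by simp) (by simp)]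
        norm_num
    _ ≤ (∫⁻ z, ENNReal.ofReal (Real.exp (-(stackedMulVec R z ⬝ᵥ stackedMulVec R z / 2)))
          ∂(Measure.pi fun _ : Fin n => stdGaussianPi (Fin d))) * (m / 2) := by
        gcongr
        exact one_half_le_lintegral_exp_neg_stackedMulVec R_le
    _ ≤ _ := lintegral_mul_const_le _ _
    _ ≤ _ := lintegral_le_lintegral_prod_add_lintegral_prod hf' hg' fun z =>
        stdGaussianPi_two_point (stackedMulVec R z) (hf'.comp measurable_prodMk_left)
          (hg'.comp measurable_prodMk_left) fun w => by
            simpa only [Function.comp_apply, hR, linSample_add_stackedMulVec hσ] using hfg _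

end LinearModel

section Hypercube

theorem assouad_card_mul_le {V ι : Type*} [Finite V] [Nonempty V] [Fintype ι]
    (τ : ι → Equiv.Perm V) (R : V → ι → ℝ≥0∞) {c S : ℝ≥0∞} (hS : ∀ v, ∑ p, R v p ≤ S)
    (hR : ∀ v p, c ≤ R v p + R (τ p v) p) : Fintype.card ι * c ≤ 2 * S := by
  cases nonempty_fintype V
  have column (p : ι) : Fintype.card V * c ≤ 2 * ∑ v, R v p :=
    calc Fintype.card V * c = ∑ _v : V, c := by simp
      _ ≤ ∑ v, (R v p + R (τ p v) p) := Finset.sum_le_sum fun v _ => hR v p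
      _ = 2 * ∑ v, R v p := by
        rw [Finset.sum_add_distrib, Equiv.sum_comp (τ p) (R · p), two_mul]
  refine (ENNReal.mul_le_mul_iff_right (a := Fintype.card V) (by simp) (by simp)).1 ?_
  calc Fintype.card V * (Fintype.card ι * c)
      = ∑ _p : ι, Fintype.card V * c := by
        rw [Finset.sum_const, Finset.card_univ, nsmul_eq_mul, mul_left_comm]
    _ ≤ ∑ p, 2 * ∑ v, R v p := Finset.sum_le_sum fun p _ => column p
    _ = 2 * ∑ v, ∑ p, R v p := by rw [← Finset.mul_sum, Finset.sum_comm]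
    _ ≤ 2 * ∑ _v : V, S := by gcongr with v; exact hS v
    _ = Fintype.card V * (2 * S) := by
        rw [Finset.sum_const, Finset.card_univ, nsmul_eq_mul, mul_left_comm]

variable {m n : Type*} {δ : ℝ}

/-- The vertex of the hypercube `{-δ, δ}^(m × n)` with sign pattern `ε`, as a matrix. -/
def signMatrix (δ : ℝ) (ε : m × n → ℤˣ) : Matrix m n ℝ :=
  Matrix.of fun i j => δ * ((ε (i, j) : ℤ) : ℝ)

theorem signMatrix_apply_sq (ε : m × n → ℤˣ) (i : m) (j : n) : signMatrix δ ε i j ^ 2 = δ ^ 2 := by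
  obtain h | h := Int.units_eq_one_or (ε (i, j)) <;> simp [signMatrix, h]

theorem signMatrix_sub_signMatrix_mul_mulSingle_sq [DecidableEq m] [DecidableEq n]
    (ε : m × n → ℤˣ) (p q : m × n) :
    (signMatrix δ ε q.1 q.2 - signMatrix δ (ε * Pi.mulSingle p (-1)) q.1 q.2) ^ 2 =
      if q = p then 4 * δ ^ 2 else 0 := by
  have flip : signMatrix δ (ε * Pi.mulSingle p (-1)) q.1 q.2 =
      if q = p then -signMatrix δ ε q.1 q.2 else signMatrix δ ε q.1 q.2 := by
    simp only [signMatrix, Matrix.of_apply, Pi.mul_apply, Pi.mulSingle_apply]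
    split_ifs <;> simp
  rw [flip]
  split_ifs
  · linear_combination 4 * signMatrix_apply_sq (δ := δ) ε q.1 q.2
  · ring

end Hypercube

section MinimaxBound

variable {d k n : ℕ} {σ δ : ℝ} {A : Matrix (Fin d) (Fin d) ℝ} {W₁ W₂ : Matrix (Fin k) (Fin d) ℝ}
  {X : Type*} [MeasurableSpace X]

theorem linLaw_sq_loss_two_point (ν : Measure X) [IsProbabilityMeasure ν] (hσ : σ ≠ 0)
    (hρ : n * rho (A * Aᵀ) W₁ W₂ ^ 2 ≤ σ ^ 2)
    {h : X × (Fin n → (Fin d → ℝ) × (Fin k → ℝ)) → ℝ} (hh : Measurable h) (a b : ℝ) :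
    ENNReal.ofReal ((a - b) ^ 2 / 8) ≤
      ∫⁻ st, ENNReal.ofReal ((h st - a) ^ 2) ∂ν.prod (Measure.pi fun _ => linLaw d k σ A W₁) +
      ∫⁻ st, ENNReal.ofReal ((h st - b) ^ 2) ∂ν.prod (Measure.pi fun _ => linLaw d k σ A W₂) := by
  have separation (t : ℝ) : ENNReal.ofReal ((a - b) ^ 2 / 2) ≤
      ENNReal.ofReal ((t - a) ^ 2) + ENNReal.ofReal ((t - b) ^ 2) := by
    rw [← ENNReal.ofReal_add (sq_nonneg _) (sq_nonneg _)]
    exact ENNReal.ofReal_le_ofReal (by linarith [sq_nonneg (2 * t - a - b)])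
  have measurable_loss (c : ℝ) : Measurable fun st => ENNReal.ofReal ((h st - c) ^ 2) := by fun_prop
  calc ENNReal.ofReal ((a - b) ^ 2 / 8)
      = ∫⁻ _, ENNReal.ofReal ((a - b) ^ 2 / 2) / 4 ∂ν := by
        rw [lintegral_const, measure_univ, mul_one, ← ENNReal.ofReal_ofNat 4,
          ← ENNReal.ofReal_div_of_pos (by norm_num), div_div]
        norm_num
    _ ≤ _ := lintegral_le_lintegral_prod_add_lintegral_prod (measurable_loss a) (measurable_loss b)
        fun s => linLaw_two_point hσ hρ ((measurable_loss a).comp measurable_prodMk_left)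
          ((measurable_loss b).comp measurable_prodMk_left) fun t => separation (h (s, t))

theorem rho_zero_signMatrix_sq (hA : IsUnit A.det) (ε : Fin k × Fin d → ℤˣ) :
    rho (A * Aᵀ) 0 (signMatrix δ ε * A⁻¹) ^ 2 = d * k * δ ^ 2 := by
  rw [rho_sq_eq_sum, Matrix.nonsing_inv_mul_cancel_right _ _ hA]
  simp [signMatrix_apply_sq, mul_comm]

theorem rho_signMatrix_flip_sq (hA : IsUnit A.det) (ε : Fin k × Fin d → ℤˣ) (p : Fin k × Fin d) :
    rho (A * Aᵀ) (signMatrix δ ε * A⁻¹) (signMatrix δ (ε * Pi.mulSingle p (-1)) * A⁻¹) ^ 2 =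
      4 * δ ^ 2 := by
  simp only [rho_sq_eq_sum, Matrix.nonsing_inv_mul_cancel_right _ _ hA,
    signMatrix_sub_signMatrix_mul_mulSingle_sq, Finset.sum_ite_eq', Finset.mem_univ, if_true]

variable {What : X × (Fin n → (Fin d → ℝ) × (Fin k → ℝ)) → Fin k → Fin d → ℝ}

theorem measurable_of_mul_apply (hWhat : Measurable What) (A : Matrix (Fin d) (Fin d) ℝ)
    (p : Fin k × Fin d) : Measurable fun st => (Matrix.of (What st) * A) p.1 p.2 := by
  simp only [Matrix.mul_apply, Matrix.of_apply]
  fun_prop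

theorem signMatrix_flip_two_point (ν : Measure X) [IsProbabilityMeasure ν] (hA : IsUnit A.det)
    (hσ : σ ≠ 0) (hδ : 4 * n * δ ^ 2 ≤ σ ^ 2) (hWhat : Measurable What)
    (ε : Fin k × Fin d → ℤˣ) (p : Fin k × Fin d) :
    ENNReal.ofReal (δ ^ 2 / 2) ≤
      ∫⁻ st, ENNReal.ofReal
          (((Matrix.of (What st) * A) p.1 p.2 - signMatrix δ ε p.1 p.2) ^ 2)
        ∂ν.prod (Measure.pi fun _ => linLaw d k σ A (signMatrix δ ε * A⁻¹)) +
      ∫⁻ st, ENNReal.ofReal (((Matrix.of (What st) * A) p.1 p.2 -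
          signMatrix δ (ε * Pi.mulSingle p (-1)) p.1 p.2) ^ 2)
        ∂ν.prod (Measure.pi fun _ =>
          linLaw d k σ A (signMatrix δ (ε * Pi.mulSingle p (-1)) * A⁻¹)) := by
  have gap : (signMatrix δ ε p.1 p.2 - signMatrix δ (ε * Pi.mulSingle p (-1)) p.1 p.2) ^ 2 / 8 =
      δ ^ 2 / 2 := by
    rw [signMatrix_sub_signMatrix_mul_mulSingle_sq, if_pos rfl]
    ring
  rw [← gap]
  refine linLaw_sq_loss_two_point ν hσ ?_ (measurable_of_mul_apply hWhat A p) _ _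
  rw [rho_signMatrix_flip_sq hA]
  linarith

theorem ofReal_le_of_forall_signMatrix_risk_le (ν : Measure X) [IsProbabilityMeasure ν]
    (hA : IsUnit A.det) (hσ : σ ≠ 0) (hδ : 4 * n * δ ^ 2 ≤ σ ^ 2) (hWhat : Measurable What)
    {S : ℝ≥0∞}
    (hS : ∀ ε : Fin k × Fin d → ℤˣ,
      ∫⁻ st, ENNReal.ofReal (rho (A * Aᵀ) (Matrix.of (What st)) (signMatrix δ ε * A⁻¹) ^ 2)
        ∂ν.prod (Measure.pi fun _ => linLaw d k σ A (signMatrix δ ε * A⁻¹)) ≤ S) :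
    ENNReal.ofReal (d * k * δ ^ 2 / 4) ≤ S := by
  have sum_coord_risk_le (ε : Fin k × Fin d → ℤˣ) : ∑ p : Fin k × Fin d, ∫⁻ st, ENNReal.ofReal
      (((Matrix.of (What st) * A) p.1 p.2 - signMatrix δ ε p.1 p.2) ^ 2)
      ∂ν.prod (Measure.pi fun _ => linLaw d k σ A (signMatrix δ ε * A⁻¹)) ≤ S := by
    rw [← lintegral_finsetSum _ fun p _ =>
      ((measurable_of_mul_apply hWhat A p).sub_const _ |>.pow_const 2).ennreal_ofReal]
    simpa only [rho_sq_eq_sum, Matrix.nonsing_inv_mul_cancel_right _ _ hA,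
      ENNReal.ofReal_sum_of_nonneg fun _ _ => sq_nonneg _] using hS ε
  have card_mul_le := assouad_card_mul_le
    (fun p : Fin k × Fin d => Equiv.mulRight (Pi.mulSingle p (-1))) _ sum_coord_risk_le
    (signMatrix_flip_two_point ν hA hσ hδ hWhat)
  rw [← ENNReal.mul_le_mul_iff_right two_ne_zero ENNReal.ofNat_ne_top]
  refine le_trans (le_of_eq ?_) card_mul_le
  rw [← ENNReal.ofReal_natCast, ← ENNReal.ofReal_ofNat 2, ← ENNReal.ofReal_mul (by positivity),
    ← ENNReal.ofReal_mul (by positivity)]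
  simp only [Fintype.card_prod, Fintype.card_fin, Nat.cast_mul]
  ring_nf

theorem minimax_lower_bound_large_distance_general (hA : IsUnit A.det) (hσ : σ ≠ 0) (hn : n ≠ 0)
    {P : Matrix (Fin k) (Fin d) ℝ → Measure X} [∀ W, IsProbabilityMeasure (P W)]
    {Δ : ℝ} (hΔ : 0 ≤ Δ) (hWhat : Measurable What) :
    ENNReal.ofReal (min (σ ^ 2 * (d * k) / (4 * n)) (Δ ^ 2) / 4) ≤
      ⨆ (WS : Matrix (Fin k) (Fin d) ℝ) (WT : Matrix (Fin k) (Fin d) ℝ)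
        (_ : rho (A * Aᵀ) WS WT ≤ Δ),
        ∫⁻ st, ENNReal.ofReal (rho (A * Aᵀ) (Matrix.of (What st)) WT ^ 2)
          ∂(P WS).prod (Measure.pi fun _ => linLaw d k σ A WT) := by
  obtain hdk | hdk := eq_or_ne (d * k : ℝ) 0
  · simp [hdk, sq_nonneg]
  set M := min (σ ^ 2 * (d * k) / (4 * n)) (Δ ^ 2)
  set δ := √(M / (d * k))
  have dkδ_sq : d * k * δ ^ 2 = M := by
    rw [Real.sq_sqrt (by positivity), mul_div_cancel₀ _ hdk]
  have indistinguishable : 4 * n * δ ^ 2 ≤ σ ^ 2 := by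
    have : M ≤ σ ^ 2 * (d * k) / (4 * n) := min_le_left _ _
    rw [← dkδ_sq, le_div_iff₀ (by positivity)] at this
    exact le_of_mul_le_mul_left (by linarith) (by positivity : (0 : ℝ) < d * k)
  rw [← dkδ_sq]
  refine ofReal_le_of_forall_signMatrix_risk_le (P 0) hA hσ indistinguishable hWhat fun ε => ?_
  refine le_iSup_of_le 0 (le_iSup₂_of_le (signMatrix δ ε * A⁻¹) ?_ le_rfl)
  refine (abs_le_of_sq_le_sq' ?_ hΔ).2
  rw [rho_zero_signMatrix_sq hA, dkδ_sq]
  exact min_le_right _ _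

end MinimaxBound

theorem rate_le_min_of_sqrt_le {σ D N n Δ : ℝ} (hD : 0 ≤ D) (hDN : D ≤ N) (hn : 0 < n)
    (hΔ : √(σ ^ 2 * D * Real.log 2 / n) ≤ Δ) :
    σ ^ 2 * D / (256 * n) ≤ min (σ ^ 2 * N / (4 * n)) (Δ ^ 2) / 4 := by
  rw [le_div_iff₀ four_pos, le_min_iff]
  constructor
  · calc σ ^ 2 * D / (256 * n) * 4 = σ ^ 2 * D / (64 * n) := by ring
      _ ≤ σ ^ 2 * N / (4 * n) :=
        div_le_div₀ (mul_nonneg (sq_nonneg σ) (hD.trans hDN)) (by gcongr) (by positivity)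
          (by linarith)
  · calc σ ^ 2 * D / (256 * n) * 4 = σ ^ 2 * D / n * (1 / 64) := by ring
      _ ≤ σ ^ 2 * D / n * Real.log 2 := by gcongr; linarith [Real.log_two_gt_d9]
      _ = σ ^ 2 * D * Real.log 2 / n := by ring
      _ ≤ Δ ^ 2 := (Real.sqrt_le_iff.1 hΔ).2

/-- minimax lower bound in the large transfer-distance regime
(Lemma `b1`, first part, of the paper). -/
theorem minimax_lower_bound_large_distance
    (d k : ℕ) (hd : 1 ≤ d) (hk : 1 ≤ k) (σ : ℝ) (hσ : 0 < σ)
    (SigS SigT AS AT : Matrix (Fin d) (Fin d) ℝ)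
    (hSS : SigS.PosSemidef) (hST : SigT.PosDef)
    (hAS : AS * ASᵀ = SigS) (hAT : AT * ATᵀ = SigT)
    (D : ℝ) (hD : D = d * k - 1) (hD20 : 20 ≤ D)
    (nS nT : ℕ) (hnS : 1 ≤ nS) (hnT : 1 ≤ nT)
    (Δ : ℝ) (hΔ : Real.sqrt (σ ^ 2 * D * Real.log 2 / nT) ≤ Δ)
    (Wh : (Fin nS → (Fin d → ℝ) × (Fin k → ℝ)) × (Fin nT → (Fin d → ℝ) × (Fin k → ℝ)) →
      Fin k → Fin d → ℝ)
    (hWh : Measurable Wh) :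
    ENNReal.ofReal (σ ^ 2 * D / (256 * nT)) ≤
      ⨆ (WS : Matrix (Fin k) (Fin d) ℝ) (WT : Matrix (Fin k) (Fin d) ℝ)
        (_ : rho SigT WS WT ≤ Δ),
        ∫⁻ st, ENNReal.ofReal (rho SigT (Matrix.of (Wh st)) WT ^ 2)
          ∂((Measure.pi fun _ : Fin nS => linLaw d k σ AS WS).prod
            (Measure.pi fun _ : Fin nT => linLaw d k σ AT WT)) := by
  subst hAT
  have hA : IsUnit AT.det := by
    refine isUnit_iff_ne_zero.2 fun h => hST.det_pos.ne' ?_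
    rw [Matrix.det_mul, h, zero_mul]
  have risk_level : σ ^ 2 * D / (256 * nT) ≤ min (σ ^ 2 * (d * k) / (4 * nT)) (Δ ^ 2) / 4 :=
    rate_le_min_of_sqrt_le (by linarith) (by linarith) (by positivity) hΔ
  exact (ENNReal.ofReal_le_ofReal risk_level).trans
    (minimax_lower_bound_large_distance_general hA hσ.ne' (by positivity)
      (P := fun WS => Measure.pi fun _ => linLaw d k σ AS WS)
      ((Real.sqrt_nonneg _).trans hΔ) hWh)
end
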